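/- arXiv:2109.07347 — 4 statements merged into one kernel-verified Lean document; each statement's English description precedes it below -/
import Mathlib

section
/- Let t ≥ 1 and let G be a simple graph of order n with minimum degree δ(G) ≥ t. If n ≥ max{6t+10, (t²+7t+8)/2} and the adjacency spectral radius satisfies λ(G) ≥ λ(K_t ∨ (K_{n−2t−1} ∪ (t+1)K₁)), then G is traceable, unless G = K_t ∨ (K_{n−2t−1} ∪ (t+1)K₁). -/
open Finset Matrix

/-- The signless Laplacian matrix `Q(G) = D(G) + A(G)` of a graph. -/
noncomputable def signlessLaplacian {V : Type*} [Fintype V] [DecidableEq V]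
    (G : SimpleGraph V) [DecidableRel G.Adj] : Matrix V V ℝ :=
  Matrix.diagonal (fun v => (G.degree v : ℝ)) + G.adjMatrix ℝ

/-- The Q-index (largest eigenvalue of the signless Laplacian). -/
noncomputable def qIndex {V : Type*} [Fintype V] [DecidableEq V]
    (G : SimpleGraph V) [DecidableRel G.Adj] : ℝ :=
  sSup {μ : ℝ | ∃ x : V → ℝ, x ≠ 0 ∧ signlessLaplacian G *ᵥ x = μ • x}

/-- The adjacency spectral radius (largest eigenvalue of the adjacency matrix). -/
noncomputable def adjSpecRad {V : Type*} [Fintype V] [DecidableEq V]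
    (G : SimpleGraph V) [DecidableRel G.Adj] : ℝ :=
  sSup {μ : ℝ | ∃ x : V → ℝ, x ≠ 0 ∧ G.adjMatrix ℝ *ᵥ x = μ • x}

/-- A graph is `k`-path-coverable if its vertex set can be covered by at most `k`
vertex-disjoint paths. -/
def PathCoverable {V : Type*} (G : SimpleGraph V) (k : ℕ) : Prop :=
  ∃ (m : ℕ) (P : Fin m → Σ (u : V) (v : V), G.Walk u v),
    m ≤ k ∧
    (∀ i, (P i).2.2.IsPath) ∧
    (∀ v : V, ∃ i, v ∈ (P i).2.2.support) ∧
    (∀ i j, i ≠ j → ∀ v, v ∈ (P i).2.2.support → v ∉ (P j).2.2.support)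

/-- A graph is traceable if it has a Hamilton path. -/
def Traceable {V : Type*} (G : SimpleGraph V) : Prop :=
  ∃ (u v : V) (p : G.Walk u v), p.IsPath ∧ ∀ w, w ∈ p.support

/-- `B(n,k,δ) = K_δ ∨ (K_{n-2δ-k} ∪ complement K_{δ+k})`: the first `δ` vertices form the
dominating clique `Y`, the next `n-2δ-k` vertices form the clique `Z`, and the
last `δ+k` vertices form the independent set `X`. -/
def Bgraph (n k δ : ℕ) : SimpleGraph (Fin n) where
  Adj i j := i ≠ j ∧ ((i : ℕ) < δ ∨ (j : ℕ) < δ ∨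
      ((i : ℕ) < n - (δ + k) ∧ (j : ℕ) < n - (δ + k)))
  symm := by
    refine ⟨?_⟩
    rintro i j ⟨hne, h⟩
    exact ⟨hne.symm, by tauto⟩
  loopless := by
    refine ⟨?_⟩
    rintro i ⟨h, -⟩
    exact h rfl

instance (n k δ : ℕ) : DecidableRel (Bgraph n k δ).Adj := fun i j =>
  inferInstanceAs (Decidable (i ≠ j ∧ ((i : ℕ) < δ ∨ (j : ℕ) < δ ∨
      ((i : ℕ) < n - (δ + k) ∧ (j : ℕ) < n - (δ + k)))))

instance {n : ℕ} (G : SimpleGraph (Fin n)) [DecidableRel G.Adj]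
    (E' : Finset (Sym2 (Fin n))) : DecidableRel (G.deleteEdges ↑E').Adj := fun a b =>
  decidable_of_iff (G.Adj a b ∧ s(a, b) ∉ E') (by simp)

/-- The edge set `E₁` of `B(n,k,δ)`: edges with both endpoints in `Y ∪ Z`. -/
def IsE1Edge (n k δ : ℕ) (e : Sym2 (Fin n)) : Prop :=
  e ∈ (Bgraph n k δ).edgeSet ∧ ∀ v ∈ e, (v : ℕ) < n - (δ + k)

/-- The family `𝓑₁(n,k,δ)`, up to isomorphism. -/
def InB1 (n k δ : ℕ) (G : SimpleGraph (Fin n)) : Prop :=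
  ∃ E' : Finset (Sym2 (Fin n)),
    (∀ e ∈ E', IsE1Edge n k δ e) ∧ E'.card ≤ δ * (δ + k) / 4 ∧
    Nonempty (G ≃g (Bgraph n k δ).deleteEdges ↑E')

/-- The family `𝓑₂(n,k,δ)`, up to isomorphism. -/
def InB2 (n k δ : ℕ) (G : SimpleGraph (Fin n)) : Prop :=
  ∃ E' : Finset (Sym2 (Fin n)),
    (∀ e ∈ E', IsE1Edge n k δ e) ∧ E'.card = δ * (δ + k) / 4 + 1 ∧
    Nonempty (G ≃g (Bgraph n k δ).deleteEdges ↑E')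

/-!
A nontraceable graph satisfies a Chvátal-type degree condition: for some `h` with `2h + 2 ≤ n`,
at least `h + 1` vertices have degree at most `h` and at least `n - h` have degree at most
`n - h - 2`. To see this, enlarge the graph to a maximal nontraceable one; there any two
nonadjacent vertices have degree sum at most `n - 2`, by rerouting Hamilton paths, and `h` is the
smaller degree in a nonadjacent pair of largest degree sum.

The minimum degree gives `h ≥ t`. If `h > t`, the degree condition leaves so few edges that the
bound `λ² - (δ - 1)λ ≤ 2m - (n - 1)δ` contradicts `λ > n - t - 2`, which holds because `B(n,1,t)`
has a clique on `n - t - 1` vertices with an edge leaving it.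

If `h = t`, take `t + 1` vertices `X` of degree at most `t` and let `Y` carry the `t` largest
entries of a Perron vector of `G`. Entries over `Y` are too large for `Y` to meet `X`, and the
quadratic form of the Perron vector does not decrease when `G` is replaced by the copy of `B(n,1,t)`
with dominating clique `Y` and independent set `X`. As `λ(G)` is at least as large, both graphs
share the Perron vector, whose positivity then forces them to coincide.
-/

section RealSymmetric

variable {V : Type*} [Fintype V] {A : Matrix V V ℝ} {μ : ℝ}

lemma dotProduct_mulVec_le_abs (hA : ∀ v w, 0 ≤ A v w) (x : V → ℝ) :
    x ⬝ᵥ (A *ᵥ x) ≤ |x| ⬝ᵥ (A *ᵥ |x|) := by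
  simp only [dotProduct, mulVec, mul_sum]
  refine sum_le_sum fun v _ ↦ sum_le_sum fun w _ ↦ ?_
  calc x v * (A v w * x w) ≤ |x v * (A v w * x w)| := le_abs_self _
    _ = |x v| * (A v w * |x w|) := by rw [abs_mul, abs_mul, abs_of_nonneg (hA v w)]

variable [DecidableEq V]

lemma mem_spectrum_iff_exists_mulVec_eq_smul :
    μ ∈ spectrum ℝ A ↔ ∃ x : V → ℝ, x ≠ 0 ∧ A *ᵥ x = μ • x := by
  rw [← spectrum_toLin', ← Module.End.hasEigenvalue_iff_mem_spectrum,
    Module.End.hasEigenvalue_iff, Submodule.ne_bot_iff]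
  simp only [Module.End.mem_eigenspace_iff, toLin'_apply, and_comm]

lemma dotProduct_smul_one_sub_mulVec (x : V → ℝ) :
    x ⬝ᵥ ((μ • (1 : Matrix V V ℝ) - A) *ᵥ x) = μ * (x ⬝ᵥ x) - x ⬝ᵥ (A *ᵥ x) := by
  rw [sub_mulVec, dotProduct_sub, smul_mulVec, one_mulVec, dotProduct_smul, smul_eq_mul]

lemma posSemidef_smul_one_sub (hA : A.IsHermitian) (hμ : μ ∈ upperBounds (spectrum ℝ A)) :
    (μ • (1 : Matrix V V ℝ) - A).PosSemidef := by
  rw [posSemidef_iff_isHermitian_and_spectrum_nonneg, ← Algebra.algebraMap_eq_smul_one,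
    ← spectrum.singleton_sub_eq]
  refine ⟨.sub ?_ hA, ?_⟩
  · simp [Algebra.algebraMap_eq_smul_one, IsHermitian]
  · rintro _ ⟨_, rfl, ν, hν, rfl⟩
    exact sub_nonneg.2 (hμ hν)

lemma dotProduct_mulVec_le (hA : A.IsHermitian) (hμ : μ ∈ upperBounds (spectrum ℝ A))
    (x : V → ℝ) : x ⬝ᵥ (A *ᵥ x) ≤ μ * (x ⬝ᵥ x) := by
  have h := (posSemidef_smul_one_sub hA hμ).dotProduct_mulVec_nonneg x
  rw [star_trivial, dotProduct_smul_one_sub_mulVec] at h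
  exact sub_nonneg.1 h

lemma mulVec_eq_smul_of_le_dotProduct_mulVec (hA : A.IsHermitian)
    (hμ : μ ∈ upperBounds (spectrum ℝ A)) {x : V → ℝ} (hx : μ * (x ⬝ᵥ x) ≤ x ⬝ᵥ (A *ᵥ x)) :
    A *ᵥ x = μ • x := by
  have h := (posSemidef_smul_one_sub hA hμ).dotProduct_mulVec_zero_iff x
  rw [star_trivial, dotProduct_smul_one_sub_mulVec, sub_mulVec, smul_mulVec, one_mulVec,
    sub_eq_zero, sub_eq_zero] at h
  exact (h.1 (hx.antisymm (dotProduct_mulVec_le hA hμ x))).symm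

end RealSymmetric

section SpectralRadius

variable {V : Type*} [Fintype V] [DecidableEq V] (G : SimpleGraph V) [DecidableRel G.Adj]

lemma adjSpecRad_eq_sSup_spectrum : adjSpecRad G = sSup (spectrum ℝ (G.adjMatrix ℝ)) :=
  congrArg sSup (Set.ext fun _ ↦ mem_spectrum_iff_exists_mulVec_eq_smul.symm)

lemma adjSpecRad_mem_upperBounds_spectrum :
    adjSpecRad G ∈ upperBounds (spectrum ℝ (G.adjMatrix ℝ)) := fun _ hν ↦ by
  rw [adjSpecRad_eq_sSup_spectrum]
  exact le_csSup finite_real_spectrum.bddAbove hν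

lemma adjSpecRad_mem_spectrum [Nonempty V] : adjSpecRad G ∈ spectrum ℝ (G.adjMatrix ℝ) := by
  rw [adjSpecRad_eq_sSup_spectrum]
  refine Set.Nonempty.csSup_mem ?_ finite_real_spectrum
  rw [(G.isHermitian_adjMatrix ℝ).spectrum_real_eq_range_eigenvalues]
  exact Set.range_nonempty _

variable {G}

lemma adjSpecRad_congr {W : Type*} [Fintype W] [DecidableEq W] {H : SimpleGraph W}
    [DecidableRel H.Adj] (e : G ≃g H) : adjSpecRad G = adjSpecRad H := by
  rw [adjSpecRad_eq_sSup_spectrum, adjSpecRad_eq_sSup_spectrum, ← e.reindex_adjMatrix ℝ]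
  exact congrArg sSup (AlgEquiv.spectrum_eq (reindexAlgEquiv ℝ ℝ e.toEquiv) _).symm

end SpectralRadius

section PerronVector

variable {V : Type*} [Fintype V]

/-- `f` is a nonzero entrywise nonnegative eigenvector of the adjacency matrix of `G` with
eigenvalue `μ`, the eigenvalue equation being read as a sum over neighbours. -/
structure IsNonnegEigenvector (G : SimpleGraph V) [DecidableRel G.Adj] (μ : ℝ) (f : V → ℝ) :
    Prop where
  nonneg : ∀ v, 0 ≤ f v
  ne_zero : f ≠ 0
  sum_neighborFinset : ∀ v, ∑ w ∈ G.neighborFinset v, f w = μ * f v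

variable {G H : SimpleGraph V} [DecidableRel G.Adj] [DecidableRel H.Adj] {μ : ℝ} {f : V → ℝ}

lemma dotProduct_adjMatrix_mulVec (x : V → ℝ) :
    x ⬝ᵥ (G.adjMatrix ℝ *ᵥ x) = ∑ v, x v * ∑ w ∈ G.neighborFinset v, x w := by
  simp only [dotProduct, SimpleGraph.adjMatrix_mulVec_apply]

lemma exists_isNonnegEigenvector [DecidableEq V] [Nonempty V] (G : SimpleGraph V)
    [DecidableRel G.Adj] : ∃ f, IsNonnegEigenvector G (adjSpecRad G) f := by
  obtain ⟨x, hx, hxe⟩ := mem_spectrum_iff_exists_mulVec_eq_smul.1 (adjSpecRad_mem_spectrum G)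
  have habs : |x| ⬝ᵥ |x| = x ⬝ᵥ x := sum_congr rfl fun v _ ↦ abs_mul_abs_self (x v)
  have hle : adjSpecRad G * (|x| ⬝ᵥ |x|) ≤ |x| ⬝ᵥ (G.adjMatrix ℝ *ᵥ |x|) := by
    calc adjSpecRad G * (|x| ⬝ᵥ |x|) = x ⬝ᵥ (G.adjMatrix ℝ *ᵥ x) := by
          rw [habs, hxe, dotProduct_smul, smul_eq_mul]
      _ ≤ _ := dotProduct_mulVec_le_abs (fun v w ↦ by
          rw [SimpleGraph.adjMatrix_apply]; positivity) x
  have heig := mulVec_eq_smul_of_le_dotProduct_mulVec (G.isHermitian_adjMatrix ℝ)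
    (adjSpecRad_mem_upperBounds_spectrum G) hle
  refine ⟨|x|, fun v ↦ abs_nonneg _, fun h ↦ hx (funext fun v ↦ abs_eq_zero.1 (congrFun h v)),
    fun v ↦ ?_⟩
  rw [← SimpleGraph.adjMatrix_mulVec_apply, heig, Pi.smul_apply, smul_eq_mul]

namespace IsNonnegEigenvector

lemma sum_pos (hf : IsNonnegEigenvector G μ f) : 0 < ∑ v, f v := by
  obtain ⟨v, hv⟩ := Function.ne_iff.1 hf.ne_zero
  exact sum_pos' (fun w _ ↦ hf.nonneg w) ⟨v, mem_univ v, (hf.nonneg v).lt_of_ne' hv⟩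

lemma dotProduct_mulVec_eq (hf : IsNonnegEigenvector G μ f) :
    f ⬝ᵥ (G.adjMatrix ℝ *ᵥ f) = μ * (f ⬝ᵥ f) := by
  rw [dotProduct_adjMatrix_mulVec, dotProduct, mul_sum]
  exact sum_congr rfl fun v _ ↦ by rw [hf.sum_neighborFinset, mul_left_comm]

lemma pos_of_connected (hf : IsNonnegEigenvector G μ f) (hG : G.Connected) (v : V) : 0 < f v := by
  have zero_of_adj {a b : V} (hab : G.Adj a b) (ha : f a = 0) : f b = 0 := by
    have hsum := hf.sum_neighborFinset a
    rw [ha, mul_zero, sum_eq_zero_iff_of_nonneg fun w _ ↦ hf.nonneg w] at hsum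
    exact hsum b ((G.mem_neighborFinset a b).2 hab)
  refine (hf.nonneg v).lt_of_ne' fun hv ↦ hf.ne_zero (funext fun w ↦ ?_)
  obtain ⟨p⟩ := hG.preconnected v w
  induction p with
  | nil => exact hv
  | cons hab _ ih => exact ih (zero_of_adj hab hv)

lemma neighborFinset_eq_of_subset (hG : IsNonnegEigenvector G μ f)
    (hH : IsNonnegEigenvector H μ f) (hpos : ∀ v, 0 < f v) {v : V}
    (h : G.neighborFinset v ⊆ H.neighborFinset v) : G.neighborFinset v = H.neighborFinset v := by
  by_contra hne
  obtain ⟨w, hw, hwG⟩ := exists_of_ssubset (h.ssubset_of_ne hne)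
  refine (sum_lt_sum_of_subset h hw hwG (hpos w) fun u _ _ ↦ hG.nonneg u).ne ?_
  rw [hG.sum_neighborFinset, hH.sum_neighborFinset]

end IsNonnegEigenvector

end PerronVector

section CliqueBound

variable {V : Type*} [Fintype V] [DecidableEq V] {G : SimpleGraph V} [DecidableRel G.Adj]

lemma card_sub_one_lt_adjSpecRad {s : Finset V} (hs : G.IsClique s) {a b : V} (ha : a ∈ s)
    (hb : b ∉ s) (hba : G.Adj b a) : (#s : ℝ) - 1 < adjSpecRad G := by
  by_contra! hle
  set x : V → ℝ := fun v ↦ if v ∈ s then 1 else 0 with hx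
  have hAx (v : V) : ∑ w ∈ G.neighborFinset v, x w = #(G.neighborFinset v ∩ s) := by
    rw [sum_boole, filter_mem_eq_inter]
  have hxx : x ⬝ᵥ x = #s := by simp [x, dotProduct]
  have hmem {v : V} (hv : v ∈ s) : s.erase v ⊆ G.neighborFinset v ∩ s := fun w hw ↦
    mem_inter.2 ⟨(G.mem_neighborFinset v w).2 (hs hv (mem_of_mem_erase hw)
      (ne_of_mem_erase hw).symm), mem_of_mem_erase hw⟩
  have hquad : ((#s : ℝ) - 1) * #s ≤ x ⬝ᵥ (G.adjMatrix ℝ *ᵥ x) := by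
    calc ((#s : ℝ) - 1) * #s = ∑ v ∈ s, (#(s.erase v) : ℝ) := by
          rw [sum_congr rfl fun v hv ↦ by rw [cast_card_erase_of_mem hv], sum_const,
            nsmul_eq_mul, mul_comm]
      _ ≤ ∑ v ∈ s, (#(G.neighborFinset v ∩ s) : ℝ) :=
          sum_le_sum fun v hv ↦ mod_cast card_le_card (hmem hv)
      _ = x ⬝ᵥ (G.adjMatrix ℝ *ᵥ x) := by
          simp only [dotProduct_adjMatrix_mulVec, hAx, x, ite_mul, one_mul, zero_mul, sum_ite_mem,
            univ_inter]
  have heig := mulVec_eq_smul_of_le_dotProduct_mulVec (G.isHermitian_adjMatrix ℝ)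
    (adjSpecRad_mem_upperBounds_spectrum G) (x := x) (by
      rw [hxx]
      exact (mul_le_mul_of_nonneg_right hle (Nat.cast_nonneg _)).trans hquad)
  have hzero : (#(G.neighborFinset b ∩ s) : ℝ) = 0 := by
    rw [← hAx, ← SimpleGraph.adjMatrix_mulVec_apply, heig, Pi.smul_apply, hx]
    simp only [hb, if_false, smul_zero]
  exact card_ne_zero_of_mem (mem_inter.2 ⟨(G.mem_neighborFinset b a).2 hba, ha⟩)
    (mod_cast hzero)

end CliqueBound

section HongBound

variable {V : Type*} [Fintype V] {G : SimpleGraph V} [DecidableRel G.Adj] {μ δ : ℝ} {f : V → ℝ}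

lemma IsNonnegEigenvector.mul_dotProduct_eq (hf : IsNonnegEigenvector G μ f) (g : V → ℝ) :
    μ * (g ⬝ᵥ f) = (fun v ↦ ∑ w ∈ G.neighborFinset v, g w) ⬝ᵥ f := by
  have hfe : G.adjMatrix ℝ *ᵥ f = μ • f := funext fun v ↦ by
    rw [SimpleGraph.adjMatrix_mulVec_apply, hf.sum_neighborFinset, Pi.smul_apply, smul_eq_mul]
  rw [← smul_eq_mul, ← dotProduct_smul, ← hfe, dotProduct_mulVec]
  exact congrArg (· ⬝ᵥ f) (funext fun v ↦ SimpleGraph.adjMatrix_vecMul_apply G v g)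

lemma sum_neighborFinset_degree_le (hδ : ∀ v, δ ≤ G.degree v) (v : V) :
    ∑ w ∈ G.neighborFinset v, (G.degree w : ℝ) ≤
      ∑ w, (G.degree w : ℝ) - (Fintype.card V - 1) * δ + (δ - 1) * G.degree v := by
  classical
  have hv : (G.degree v : ℝ) - δ ≤ ∑ w ∈ (G.neighborFinset v)ᶜ, ((G.degree w : ℝ) - δ) :=
    single_le_sum (f := fun w ↦ (G.degree w : ℝ) - δ) (fun w _ ↦ sub_nonneg.2 (hδ w))
      (mem_compl.2 (G.notMem_neighborFinset_self v))
  have hsplit := sum_add_sum_compl (G.neighborFinset v) fun w ↦ (G.degree w : ℝ) - δ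
  simp only [sum_sub_distrib (f := fun w ↦ (G.degree w : ℝ)), sum_const, nsmul_eq_mul,
    SimpleGraph.card_neighborFinset_eq_degree, card_univ] at hv hsplit
  linarith

lemma IsNonnegEigenvector.sq_sub_mul_le_sum_degree (hf : IsNonnegEigenvector G μ f)
    (hδ : ∀ v, δ ≤ G.degree v) :
    μ ^ 2 - (δ - 1) * μ ≤ ∑ v, (G.degree v : ℝ) - (Fintype.card V - 1) * δ := by
  set c : ℝ := ∑ v, (G.degree v : ℝ) - (Fintype.card V - 1) * δ
  set d : V → ℝ := fun v ↦ G.degree v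
  have hone : μ * ∑ v, f v = d ⬝ᵥ f := by
    simpa [dotProduct] using hf.mul_dotProduct_eq 1
  have hdeg : μ * (d ⬝ᵥ f) ≤ c * ∑ v, f v + (δ - 1) * (d ⬝ᵥ f) := by
    rw [hf.mul_dotProduct_eq d, dotProduct, dotProduct, mul_sum, mul_sum, ← sum_add_distrib]
    refine sum_le_sum fun v _ ↦ ?_
    calc _ ≤ (c + (δ - 1) * d v) * f v :=
          mul_le_mul_of_nonneg_right (sum_neighborFinset_degree_le hδ v) (hf.nonneg v)
      _ = _ := by ring
  refine le_of_mul_le_mul_right ?_ hf.sum_pos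
  rw [← hone] at hdeg
  linarith

end HongBound

section Traceability

variable {V : Type*} {G : SimpleGraph V}

lemma traceable_iff_exists_list :
    Traceable G ↔ ∃ l : List V, l ≠ [] ∧ l.IsChain G.Adj ∧ l.Nodup ∧ ∀ v, v ∈ l := by
  constructor
  · rintro ⟨u, v, p, hp, hmem⟩
    exact ⟨p.support, p.support_ne_nil, p.isChain_adj_support, hp.support_nodup, hmem⟩
  · rintro ⟨l, hne, hchain, hnodup, hmem⟩
    refine ⟨_, _, .ofSupport l hne hchain, .mk' ?_, fun w ↦ ?_⟩ <;>
      rw [SimpleGraph.Walk.support_ofSupport]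
    exacts [hnodup, hmem w]

lemma traceable_top [Finite V] [Nonempty V] : Traceable (⊤ : SimpleGraph V) := by
  have := Fintype.ofFinite V
  refine traceable_iff_exists_list.2 ⟨univ.toList, ?_, (nodup_toList univ).isChain,
    nodup_toList univ, fun v ↦ mem_toList.2 (mem_univ v)⟩
  exact toList_eq_nil.not.2 univ_nonempty.ne_empty

end Traceability

section OreCondition

lemma countP_add_countP_le_length {α : Type*} {P Q : α → Prop} [DecidablePred P]
    [DecidablePred Q] {a : α} {l : List α}
    (hchain : (a :: l).IsChain fun x y ↦ ¬(P x ∧ Q y)) (hlast : ∀ x ∈ (a :: l).getLast?, ¬P x) :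
    (a :: l).countP (P ·) + l.countP (Q ·) ≤ l.length := by
  induction l generalizing a with
  | nil => simp [hlast a (by simp)]
  | cons b l ih =>
    rw [List.isChain_cons_cons] at hchain
    obtain ⟨hab, hchain⟩ := hchain
    have := ih hchain fun x hx ↦ hlast x (by simpa using hx)
    rw [List.countP_cons (a := a), List.countP_cons (a := b) (p := (Q ·)), List.length_cons]
    grind

variable {V : Type*} {G : SimpleGraph V} {u v : V} {l₁ l₂ : List V}

lemma isChain_adj_reverse {l : List V} (h : l.IsChain G.Adj) : l.reverse.IsChain G.Adj :=
  List.isChain_reverse.2 (h.imp fun _ _ h ↦ h.symm)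

/-- Traverse `l₁` backwards to `u`, jump to the end of `p`, return to `v` and jump to `q`. -/
lemma isChain_adj_reroute (h₁ : (u :: l₁).IsChain G.Adj) (h₂ : (v :: l₂).IsChain G.Adj)
    {p q : List V} (hpq : v :: l₂ = p ++ q) (hu : ∀ x ∈ p.getLast?, G.Adj u x)
    (hv : ∀ y ∈ q.head?, G.Adj v y) :
    ((u :: l₁).reverse ++ (p.reverse ++ q)).IsChain G.Adj := by
  cases p with
  | nil => exact absurd (hv v (by simp [← show v :: l₂ = q from hpq])) G.irrefl
  | cons w p =>
    obtain ⟨rfl, rfl⟩ := List.cons_eq_cons.1 hpq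
    obtain ⟨hp, hq, -⟩ := List.isChain_append.1 (show (v :: p ++ q).IsChain G.Adj from h₂)
    refine (isChain_adj_reverse h₁).append ((isChain_adj_reverse hp).append hq ?_) ?_
    · simpa using hv
    · simpa [List.getLast?_cons] using hu

lemma countP_adj_add_countP_adj_le_length [DecidableRel G.Adj] (h₁ : (u :: l₁).IsChain G.Adj)
    (h₂ : (v :: l₂).IsChain G.Adj)
    (h : ∀ l : List V, l.Perm (u :: l₁ ++ v :: l₂) → ¬l.IsChain G.Adj) :
    (v :: l₂).countP (G.Adj u ·) + (v :: l₂).countP (G.Adj v ·) ≤ l₂.length := by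
  have no_reroute (p q : List V) (hpq : v :: l₂ = p ++ q)
      (hu : ∀ x ∈ p.getLast?, G.Adj u x) : ¬∀ y ∈ q.head?, G.Adj v y := fun hv ↦ by
    refine h _ ?_ (isChain_adj_reroute h₁ h₂ hpq hu hv)
    rw [hpq]
    exact (List.reverse_perm _).append ((List.reverse_perm _).append_right _)
  rw [List.countP_cons_of_neg (p := (G.Adj v ·)) (by simp)]
  refine countP_add_countP_le_length ?_ fun x hx hux ↦ ?_
  · rw [List.isChain_iff_forall_rel_of_append_cons_cons]
    rintro x y p q hpq ⟨hux, hvy⟩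
    exact no_reroute (p ++ [x]) (y :: q) (by simp [hpq]) (by simpa using hux) (by simpa using hvy)
  · refine no_reroute (v :: l₂) [] (by simp) (fun y hy ↦ ?_) (by simp)
    rwa [Option.mem_unique hy hx]

variable [Fintype V] [DecidableRel G.Adj]

lemma countP_adj_eq_degree {l : List V} (hnodup : l.Nodup) (hmem : ∀ w, w ∈ l) :
    l.countP (G.Adj u ·) = G.degree u := by
  classical
  rw [List.countP_eq_length_filter, ← List.toFinset_card_of_nodup (hnodup.filter _),
    ← SimpleGraph.card_neighborFinset_eq_degree]
  exact congrArg card (by ext; simp [hmem])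

lemma degree_add_degree_add_two_le_of_isChain (hG : ¬Traceable G) (h₁ : (u :: l₁).IsChain G.Adj)
    (h₂ : (v :: l₂).IsChain G.Adj) (hnodup : (u :: l₁ ++ v :: l₂).Nodup)
    (hmem : ∀ w, w ∈ u :: l₁ ++ v :: l₂) : G.degree u + G.degree v + 2 ≤ Fintype.card V := by
  have hperm (l : List V) (hl : l.Perm (u :: l₁ ++ v :: l₂)) : ¬l.IsChain G.Adj := fun hchain ↦
    hG (traceable_iff_exists_list.2 ⟨l, List.ne_nil_of_mem (hl.mem_iff.2 (hmem u)), hchain,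
      hl.nodup_iff.2 hnodup, fun w ↦ hl.mem_iff.2 (hmem w)⟩)
  have hcount₂ := countP_adj_add_countP_adj_le_length h₁ h₂ hperm
  have hcount₁ := countP_adj_add_countP_adj_le_length h₂ h₁
    fun l hl ↦ hperm l (hl.trans List.perm_append_comm)
  have hcard : (u :: l₁ ++ v :: l₂).length ≤ Fintype.card V := hnodup.length_le_card
  rw [← countP_adj_eq_degree hnodup hmem, ← countP_adj_eq_degree hnodup hmem,
    List.countP_append, List.countP_append]
  rw [List.length_append, List.length_cons, List.length_cons] at hcard
  lia

end OreCondition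

section Saturation

variable {V : Type*} {G : SimpleGraph V} {u v : V}

lemma isChain_adj_of_sup_edge {l : List V} (h : l.IsChain (G ⊔ SimpleGraph.edge u v).Adj)
    (hv : v ∉ l) : l.IsChain G.Adj := by
  refine h.imp_of_mem_imp fun a b ha hb hab ↦ ?_
  rw [SimpleGraph.sup_adj, SimpleGraph.edge_adj] at hab
  grind

lemma degree_add_degree_add_two_le_of_isChain_sup_edge [Fintype V] [DecidableRel G.Adj]
    (hG : ¬Traceable G) {l₁ l₂ : List V}
    (h : (l₁ ++ u :: v :: l₂).IsChain (G ⊔ SimpleGraph.edge u v).Adj)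
    (hnodup : (l₁ ++ u :: v :: l₂).Nodup) (hmem : ∀ w, w ∈ l₁ ++ u :: v :: l₂) :
    G.degree u + G.degree v + 2 ≤ Fintype.card V := by
  have hperm : (u :: l₁.reverse ++ v :: l₂).Perm (l₁ ++ u :: v :: l₂) := by
    rw [← List.singleton_append (l := v :: l₂), ← List.append_assoc,
      ← List.reverse_concat]
    exact (List.reverse_perm _).append_right _
  obtain ⟨hu, -, hv⟩ := List.isChain_append_cons_cons.1 h
  have hu' : (l₁ ++ [u]).IsChain G.Adj := isChain_adj_of_sup_edge hu (by grind)
  have hv' : (v :: l₂).IsChain G.Adj :=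
    isChain_adj_of_sup_edge (SimpleGraph.edge_comm u v ▸ hv) (by grind)
  exact degree_add_degree_add_two_le_of_isChain hG (by simpa using isChain_adj_reverse hu') hv'
    (hperm.nodup_iff.2 hnodup) fun w ↦ hperm.mem_iff.2 (hmem w)

lemma degree_add_degree_add_two_le_of_traceable_sup_edge [Fintype V] [DecidableRel G.Adj]
    (hG : ¬Traceable G) (h : Traceable (G ⊔ SimpleGraph.edge u v)) :
    G.degree u + G.degree v + 2 ≤ Fintype.card V := by
  obtain ⟨l, hne, hchain, hnodup, hmem⟩ := traceable_iff_exists_list.1 h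
  have hnot : ¬l.IsChain G.Adj := fun hl ↦
    hG (traceable_iff_exists_list.2 ⟨l, hne, hl, hnodup, hmem⟩)
  rw [List.isChain_iff_forall_rel_of_append_cons_cons] at hnot
  push Not at hnot
  obtain ⟨a, b, l₁, l₂, rfl, hab⟩ := hnot
  have hedge := (List.isChain_append_cons_cons.1 hchain).2.1
  rw [SimpleGraph.sup_adj, or_iff_right hab, SimpleGraph.edge_adj] at hedge
  obtain ⟨rfl, rfl⟩ | ⟨rfl, rfl⟩ := hedge.1
  · exact degree_add_degree_add_two_le_of_isChain_sup_edge hG hchain hnodup hmem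
  · rw [add_comm (G.degree _)]
    exact degree_add_degree_add_two_le_of_isChain_sup_edge hG
      (SimpleGraph.edge_comm _ _ ▸ hchain) hnodup hmem

end Saturation

section ChvatalCondition

variable {V : Type*} [Fintype V] {G H : SimpleGraph V} [DecidableRel G.Adj] [DecidableRel H.Adj]

lemma degree_add_degree_add_two_le_of_maximal (hH : Maximal (fun H ↦ ¬Traceable H) H) {u v : V}
    (huv : Hᶜ.Adj u v) : H.degree u + H.degree v + 2 ≤ Fintype.card V := by
  refine degree_add_degree_add_two_le_of_traceable_sup_edge hH.prop ?_
  by_contra hsup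
  refine huv.2 (hH.le_of_ge hsup le_sup_left ?_)
  exact .inr ((SimpleGraph.edge_adj ..).2 ⟨.inl ⟨rfl, rfl⟩, huv.1⟩)

lemma exists_compl_adj_degree_add_degree_max (hH : H ≠ ⊤) :
    ∃ u v, Hᶜ.Adj u v ∧ H.degree u ≤ H.degree v ∧
      ∀ a b, Hᶜ.Adj a b → H.degree a + H.degree b ≤ H.degree u + H.degree v := by
  classical
  obtain ⟨a, b, hab⟩ := SimpleGraph.ne_bot_iff_exists_adj.1 (compl_eq_bot.not.2 hH)
  obtain ⟨⟨u, v⟩, huv, hmax⟩ := exists_max_image {p : V × V | Hᶜ.Adj p.1 p.2}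
    (fun p ↦ H.degree p.1 + H.degree p.2) ⟨(a, b), by simpa using hab⟩
  simp only [mem_filter, mem_univ, true_and, Prod.forall] at huv hmax
  obtain hle | hle := le_total (H.degree u) (H.degree v)
  · exact ⟨u, v, huv, hle, hmax⟩
  · exact ⟨v, u, huv.symm, hle, fun a b hab ↦ (hmax a b hab).trans_eq (add_comm _ _)⟩

lemma exists_degree_condition_of_not_traceable [Nonempty V] (hG : ¬Traceable G) :
    ∃ h, 2 * h + 2 ≤ Fintype.card V ∧ h + 1 ≤ #{w | G.degree w ≤ h} ∧
      Fintype.card V - h ≤ #{w | G.degree w + h + 2 ≤ Fintype.card V} := by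
  classical
  obtain ⟨H, hGH, hH⟩ :=
    (Set.toFinite {H : SimpleGraph V | ¬Traceable H}).exists_le_maximal hG
  have hdeg (w : V) : G.degree w ≤ H.degree w := SimpleGraph.degree_le_of_le hGH
  obtain ⟨u, v, huv, hle, hmax⟩ := exists_compl_adj_degree_add_degree_max (H := H)
    fun htop ↦ hH.prop (htop ▸ traceable_top)
  have hsum := degree_add_degree_add_two_le_of_maximal hH huv
  have hcompl (w : V) : #(Hᶜ.neighborFinset w) = Fintype.card V - 1 - H.degree w := by
    rw [SimpleGraph.card_neighborFinset_eq_degree, SimpleGraph.degree_compl]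
  refine ⟨H.degree u, by lia, ?_, ?_⟩
  · calc H.degree u + 1 ≤ #(Hᶜ.neighborFinset v) := by rw [hcompl]; lia
      _ ≤ #{w | G.degree w ≤ H.degree u} := card_le_card fun w hw ↦ by
          rw [SimpleGraph.mem_neighborFinset] at hw
          have := hmax v w hw
          exact mem_filter.2 ⟨mem_univ w, (hdeg w).trans (by lia)⟩
  · calc Fintype.card V - H.degree u ≤ #(insert u (Hᶜ.neighborFinset u)) := by
          rw [card_insert_of_notMem (Hᶜ.notMem_neighborFinset_self u), hcompl]
          lia
      _ ≤ #{w | G.degree w + H.degree u + 2 ≤ Fintype.card V} := card_le_card fun w hw ↦ by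
          have := hdeg w
          rw [mem_insert, SimpleGraph.mem_neighborFinset] at hw
          refine mem_filter.2 ⟨mem_univ w, ?_⟩
          obtain rfl | hw := hw
          · lia
          · have := hmax u w hw
            lia

end ChvatalCondition

section DegreeSum

variable {V : Type*} [Fintype V] {G : SimpleGraph V} [DecidableRel G.Adj] {h : ℕ}

/-- A vertex loses `h + 1` from the trivial bound `n - 1` if its degree is at most `n - h - 2`, and
`n - 2h - 2` more if its degree is at most `h`. -/
lemma sum_degree_le_of_degree_condition (hh : 2 * h + 2 ≤ Fintype.card V)
    (hlow : h + 1 ≤ #{w | G.degree w ≤ h})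
    (hmid : Fintype.card V - h ≤ #{w | G.degree w + h + 2 ≤ Fintype.card V}) :
    ∑ v, (G.degree v : ℝ) ≤ (Fintype.card V : ℝ) * (Fintype.card V - 1) -
      (h + 1) * (2 * Fintype.card V - 3 * h - 2) := by
  set n := Fintype.card V with hn
  have hhR : (2 * h + 2 : ℝ) ≤ n := mod_cast hh
  have hlowR : (h + 1 : ℝ) ≤ #{w | G.degree w ≤ h} := mod_cast hlow
  have hmidR : (n - h : ℝ) ≤ #{w | G.degree w + h + 2 ≤ n} := by
    rw [← Nat.cast_sub (by lia)]
    exact mod_cast hmid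
  have hpoint (v : V) : (G.degree v : ℝ) ≤ (n - 1) -
      (if G.degree v + h + 2 ≤ n then (h + 1 : ℝ) else 0) -
      (if G.degree v ≤ h then (n - 2 * h - 2 : ℝ) else 0) := by
    have hlt : (G.degree v + 1 : ℝ) ≤ n := mod_cast G.degree_lt_card_verts v
    split_ifs with hv hv'
    · have : (G.degree v : ℝ) ≤ h := mod_cast hv'
      linarith
    · have : (G.degree v + h + 2 : ℝ) ≤ n := mod_cast hv
      linarith
    · lia
    · linarith
  have hsum := sum_le_sum fun v (_ : v ∈ univ) ↦ hpoint v
  rw [sum_sub_distrib, sum_sub_distrib, ← sum_filter, ← sum_filter] at hsum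
  simp only [sum_const, nsmul_eq_mul, card_univ, ← hn] at hsum
  have hlow' := mul_le_mul_of_nonneg_right hlowR (by linarith : (0 : ℝ) ≤ n - 2 * h - 2)
  have hmid' := mul_le_mul_of_nonneg_right hmidR (by positivity : (0 : ℝ) ≤ h + 1)
  linarith

end DegreeSum

section VertexClasses

variable {V W : Type*} [Fintype V] [Fintype W] {X Y : Finset V} {X' Y' : Finset W}

lemma card_filter_decide_mem_eq [DecidableEq V] (h : Disjoint X Y) (a b : Bool) :
    #{v | (decide (v ∈ X), decide (v ∈ Y)) = (a, b)} =
      bif a then (bif b then 0 else #X) else bif b then #Y else Fintype.card V - (#X + #Y) := by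
  rw [← card_union_of_disjoint h, ← card_compl, ← card_empty]
  rw [disjoint_left] at h
  cases a <;> cases b <;> simp only [cond_true, cond_false] <;> congr 1 <;> grind [mem_compl]

lemma exists_equiv_mem_iff_mem_iff (h : Disjoint X Y) (h' : Disjoint X' Y') (hX : #X = #X')
    (hY : #Y = #Y') (hcard : Fintype.card V = Fintype.card W) :
    ∃ e : V ≃ W, ∀ v, (e v ∈ X' ↔ v ∈ X) ∧ (e v ∈ Y' ↔ v ∈ Y) := by
  classical
  set c : V → Bool × Bool := fun v ↦ (decide (v ∈ X), decide (v ∈ Y))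
  set c' : W → Bool × Bool := fun w ↦ (decide (w ∈ X'), decide (w ∈ Y'))
  have hfiber (p : Bool × Bool) : Fintype.card {v // c v = p} = Fintype.card {w // c' w = p} := by
    rw [Fintype.card_subtype, Fintype.card_subtype, card_filter_decide_mem_eq h,
      card_filter_decide_mem_eq h', hX, hY, hcard]
  set e := Equiv.ofFiberEquiv fun p ↦ Fintype.equivOfCardEq (hfiber p)
  have he (v : V) : c' (e v) = c v := Equiv.ofFiberEquiv_map _ v
  simp only [c, c', Prod.mk.injEq, decide_eq_decide] at he
  exact ⟨e, he⟩

end VertexClasses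

section ExtremalGraph

variable {n k t : ℕ}

lemma lt_adjSpecRad_Bgraph (ht : 1 ≤ t) (hn : 2 * t + k ≤ n) :
    (n : ℝ) - t - k - 1 < adjSpecRad (Bgraph n k t) := by
  set s : Finset (Fin n) := {i | i < n - (t + k)}
  have hs : (Bgraph n k t).IsClique s := fun i hi j hj hij ↦
    ⟨hij, .inr (.inr ⟨by simpa [s] using hi, by simpa [s] using hj⟩)⟩
  have hcard : (#s : ℝ) = n - t - k := by
    rw [Fin.card_filter_val_lt, min_eq_right (by lia), Nat.cast_sub (by lia), Nat.cast_add]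
    ring
  rw [← hcard]
  refine card_sub_one_lt_adjSpecRad hs (a := ⟨0, by lia⟩) (b := ⟨n - 1, by lia⟩) ?_ ?_ ?_
  · exact mem_filter.2 ⟨mem_univ _, by dsimp only; lia⟩
  · simp only [s, mem_filter, mem_univ, true_and]
    lia
  · exact ⟨by simp only [ne_eq, Fin.mk.injEq]; lia, .inr (.inl ht)⟩

variable {V : Type*}

/-- The copy of `B(n,k,δ)` on `V` in which `Y` is the dominating clique, `X` the independent set,
and the clique `Z` consists of the remaining vertices. -/
def BgraphOn (X Y : Finset V) : SimpleGraph V where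
  Adj a b := a ≠ b ∧ (a ∈ Y ∨ b ∈ Y ∨ a ∉ X ∧ b ∉ X)
  symm := ⟨fun _ _ h ↦ ⟨h.1.symm, by tauto⟩⟩
  loopless := ⟨fun _ h ↦ h.1 rfl⟩

variable {X Y : Finset V}

lemma BgraphOn_adj {a b : V} :
    (BgraphOn X Y).Adj a b ↔ a ≠ b ∧ (a ∈ Y ∨ b ∈ Y ∨ a ∉ X ∧ b ∉ X) :=
  Iff.rfl

instance [DecidableEq V] : DecidableRel (BgraphOn X Y).Adj := fun _ _ ↦
  decidable_of_iff' _ BgraphOn_adj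

lemma BgraphOn_connected (hY : Y.Nonempty) : (BgraphOn X Y).Connected := by
  obtain ⟨y, hy⟩ := hY
  refine (SimpleGraph.connected_iff_exists_forall_reachable _).2 ⟨y, fun v ↦ ?_⟩
  obtain rfl | hv := eq_or_ne y v
  · exact .refl _
  · exact SimpleGraph.Adj.reachable ⟨hv, .inl hy⟩

lemma nonempty_Bgraph_iso_BgraphOn [Fintype V] (hV : Fintype.card V = n) (hX : #X = t + k)
    (hY : #Y = t) (h : Disjoint X Y) : Nonempty (Bgraph n k t ≃g BgraphOn X Y) := by
  classical
  have hn : #X + #Y ≤ n := (card_union_of_disjoint h).symm.trans_le (hV ▸ card_le_univ _)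
  set K : Finset (Fin n) := {i | i < n - (t + k)}
  set Y' : Finset (Fin n) := {i | i < t}
  have h' : Disjoint Kᶜ Y' := by
    rw [disjoint_left]
    grind [mem_compl]
  have hX' : #Kᶜ = #X := by
    rw [card_compl, Fin.card_filter_val_lt, Fintype.card_fin]
    lia
  have hY' : #Y' = #Y := by
    rw [Fin.card_filter_val_lt]
    lia
  obtain ⟨e, he⟩ := exists_equiv_mem_iff_mem_iff h' h hX' hY' ((Fintype.card_fin n).trans hV.symm)
  refine ⟨⟨e, fun {i j} ↦ ?_⟩⟩
  simp only [BgraphOn_adj, Bgraph, he, K, Y', mem_compl, mem_filter, mem_univ, true_and,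
    not_not, ne_eq, EmbeddingLike.apply_eq_iff_eq]

variable [Fintype V] [DecidableEq V] {v : V}

lemma neighborFinset_BgraphOn_of_mem_left (h : Disjoint X Y) (hv : v ∈ X) :
    (BgraphOn X Y).neighborFinset v = Y := by
  have := disjoint_left.1 h hv
  ext w
  rw [SimpleGraph.mem_neighborFinset, BgraphOn_adj]
  grind

end ExtremalGraph

section Heaviest

variable {V : Type*} {f : V → ℝ} {Y : Finset V}

/-- `Y` has the largest `f`-weight among all sets with at most as many elements; for the Perron
vector, such a `Y` is where the dominating clique of the extremal graph is placed. -/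
def IsHeaviest (f : V → ℝ) (Y : Finset V) : Prop :=
  ∀ N : Finset V, #N ≤ #Y → ∑ v ∈ N, f v ≤ ∑ v ∈ Y, f v

lemma exists_isHeaviest [Fintype V] (hf : ∀ v, 0 ≤ f v) {t : ℕ} (ht : t ≤ Fintype.card V) :
    ∃ Y, #Y = t ∧ IsHeaviest f Y := by
  obtain ⟨Y, hY, hmax⟩ := exists_max_image (powersetCard t univ) (fun N ↦ ∑ v ∈ N, f v)
    (powersetCard_nonempty.2 ht)
  rw [mem_powersetCard_univ] at hY
  refine ⟨Y, hY, fun N hN ↦ ?_⟩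
  obtain ⟨N', hNN', hN'⟩ := exists_superset_card_eq (hN.trans_eq hY) ht
  exact (sum_le_sum_of_subset_of_nonneg hNN' fun v _ _ ↦ hf v).trans
    (hmax N' (mem_powersetCard_univ.2 hN'))

lemma IsHeaviest.le (hY : IsHeaviest f Y) {y z : V} (hy : y ∈ Y) (hz : z ∉ Y) : f z ≤ f y := by
  classical
  have hz' : z ∉ Y.erase y := fun h ↦ hz (mem_of_mem_erase h)
  have hle := hY (insert z (Y.erase y)) (by rw [card_insert_of_notMem hz', card_erase_add_one hy])
  rw [sum_insert hz', ← add_sum_erase Y f hy] at hle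
  exact le_of_add_le_add_right hle

variable [Fintype V] {G : SimpleGraph V} [DecidableRel G.Adj] {μ : ℝ}

lemma IsHeaviest.mul_le_mul_degree (hY : IsHeaviest f Y) (hf : IsNonnegEigenvector G μ f)
    (hμ : 0 ≤ μ) {y : V} (hy : y ∈ Y) :
    μ * (μ - #Y + 1) ≤ (Fintype.card V - #Y + 1) * G.degree y := by
  classical
  obtain ⟨v, hv⟩ := Function.ne_iff.1 hf.ne_zero
  have : Nonempty V := ⟨v⟩
  obtain ⟨w, hw⟩ := Finite.exists_max f
  have hpos : 0 < f w := ((hf.nonneg v).lt_of_ne' hv).trans_le (hw v)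
  have hYc : (#Y : ℝ) ≤ Fintype.card V := mod_cast card_le_univ Y
  have hfy : μ * f y ≤ G.degree y * f w := by
    rw [← hf.sum_neighborFinset, ← SimpleGraph.card_neighborFinset_eq_degree, ← nsmul_eq_mul]
    exact sum_le_card_nsmul _ _ _ fun u _ ↦ hw u
  have hfw : μ * f w ≤ (#Y - 1) * f w + (Fintype.card V - #Y + 1) * f y := by
    have hcard : (#(Y.erase y)ᶜ : ℝ) = Fintype.card V - #Y + 1 := by
      rw [card_compl, Nat.cast_sub (card_le_univ _), cast_card_erase_of_mem hy]
      ring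
    calc μ * f w = ∑ u ∈ G.neighborFinset w, f u := (hf.sum_neighborFinset w).symm
      _ ≤ ∑ u, f u := sum_le_univ_sum_of_nonneg hf.nonneg
      _ = ∑ u ∈ Y.erase y, f u + ∑ u ∈ (Y.erase y)ᶜ, f u := (sum_add_sum_compl _ _).symm
      _ ≤ #(Y.erase y) • f w + #(Y.erase y)ᶜ • f y := by
          refine add_le_add (sum_le_card_nsmul _ _ _ fun u _ ↦ hw u)
            (sum_le_card_nsmul _ _ _ fun u hu ↦ ?_)
          rw [mem_compl, mem_erase, not_and_or, not_not] at hu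
          obtain rfl | hu := hu
          exacts [le_rfl, hY.le hy hu]
      _ = _ := by rw [nsmul_eq_mul, nsmul_eq_mul, hcard, cast_card_erase_of_mem hy]
  refine le_of_mul_le_mul_right ?_ hpos
  calc μ * (μ - #Y + 1) * f w = μ * (μ * f w - (#Y - 1) * f w) := by ring
    _ ≤ μ * ((Fintype.card V - #Y + 1) * f y) := by gcongr; linarith
    _ = (Fintype.card V - #Y + 1) * (μ * f y) := by ring
    _ ≤ (Fintype.card V - #Y + 1) * (G.degree y * f w) := by gcongr
    _ = (Fintype.card V - #Y + 1) * G.degree y * f w := by ring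

end Heaviest

section Comparison

variable {V : Type*} [Fintype V] [DecidableEq V] {G : SimpleGraph V} [DecidableRel G.Adj]
  {f : V → ℝ} {X Y : Finset V} {μ : ℝ}

lemma dotProduct_adjMatrix_mulVec_eq_add_add (G : SimpleGraph V) [DecidableRel G.Adj]
    (f : V → ℝ) (X : Finset V) :
    f ⬝ᵥ (G.adjMatrix ℝ *ᵥ f) =
      ∑ a ∈ X, f a * ∑ b ∈ G.neighborFinset a, f b +
      ∑ a ∈ Xᶜ, f a * ∑ b ∈ G.neighborFinset a \ X, f b +
      ∑ a ∈ X, f a * ∑ b ∈ G.neighborFinset a \ X, f b := by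
  have hcross : ∑ a ∈ Xᶜ, f a * ∑ b ∈ G.neighborFinset a ∩ X, f b =
      ∑ a ∈ X, f a * ∑ b ∈ G.neighborFinset a \ X, f b := by
    simp only [mul_sum]
    rw [sum_comm' (t' := X) (s' := fun b ↦ G.neighborFinset b \ X)]
    · exact sum_congr rfl fun a _ ↦ sum_congr rfl fun b _ ↦ mul_comm _ _
    · simp only [mem_compl, mem_inter, mem_sdiff, SimpleGraph.mem_neighborFinset, G.adj_comm]
      tauto
  rw [dotProduct_adjMatrix_mulVec, ← sum_add_sum_compl X, add_assoc, ← hcross,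
    ← sum_add_distrib]
  congr 1
  exact sum_congr rfl fun a _ ↦ by rw [← mul_add, add_comm, sum_inter_add_sum_sdiff]

lemma dotProduct_adjMatrix_mulVec_le_BgraphOn (hf : ∀ v, 0 ≤ f v) (hY : IsHeaviest f Y)
    (hXY : Disjoint X Y) (hX : ∀ x ∈ X, G.degree x ≤ #Y) :
    f ⬝ᵥ (G.adjMatrix ℝ *ᵥ f) ≤ f ⬝ᵥ ((BgraphOn X Y).adjMatrix ℝ *ᵥ f) := by
  have hN {x : V} (hx : x ∈ X) {N : Finset V} (hNx : N ⊆ G.neighborFinset x) :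
      ∑ b ∈ N, f b ≤ ∑ b ∈ Y, f b :=
    hY N ((card_le_card hNx).trans ((G.card_neighborFinset_eq_degree x).trans_le (hX x hx)))
  rw [dotProduct_adjMatrix_mulVec_eq_add_add G f X,
    dotProduct_adjMatrix_mulVec_eq_add_add (BgraphOn X Y) f X]
  refine add_le_add (add_le_add ?_ ?_) ?_ <;>
    refine sum_le_sum fun a ha ↦ mul_le_mul_of_nonneg_left ?_ (hf a)
  · rw [neighborFinset_BgraphOn_of_mem_left hXY ha]
    exact hN ha Subset.rfl
  · refine sum_le_sum_of_subset_of_nonneg (fun b hb ↦ ?_) fun v _ _ ↦ hf v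
    rw [mem_sdiff, SimpleGraph.mem_neighborFinset] at hb ⊢
    exact ⟨⟨hb.1.ne, .inr (.inr ⟨mem_compl.1 ha, hb.2⟩)⟩, hb.2⟩
  · rw [neighborFinset_BgraphOn_of_mem_left hXY ha, sdiff_eq_self_of_disjoint hXY.symm]
    exact hN ha sdiff_subset

lemma eq_BgraphOn_of_isNonnegEigenvector (hG : IsNonnegEigenvector G μ f)
    (hB : IsNonnegEigenvector (BgraphOn X Y) μ f) (hpos : ∀ v, 0 < f v) (hXY : Disjoint X Y)
    (hX : ∀ x ∈ X, G.degree x ≤ #Y) : G = BgraphOn X Y := by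
  have hNY {y : V} (hy : y ∈ Y) : G.neighborFinset y = (BgraphOn X Y).neighborFinset y := by
    refine hG.neighborFinset_eq_of_subset hB hpos fun b hb ↦ ?_
    rw [SimpleGraph.mem_neighborFinset] at hb ⊢
    exact ⟨hb.ne, .inl hy⟩
  have hNX {x : V} (hx : x ∈ X) : G.neighborFinset x = Y := by
    refine (eq_of_subset_of_card_le (fun y hy ↦ ?_)
      ((G.card_neighborFinset_eq_degree x).trans_le (hX x hx))).symm
    rw [SimpleGraph.mem_neighborFinset, G.adj_comm, ← SimpleGraph.mem_neighborFinset, hNY hy,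
      SimpleGraph.mem_neighborFinset]
    exact ⟨fun h ↦ disjoint_left.1 hXY hx (h ▸ hy), .inl hy⟩
  have hN (a : V) : G.neighborFinset a = (BgraphOn X Y).neighborFinset a := by
    by_cases ha : a ∈ X
    · rw [hNX ha, neighborFinset_BgraphOn_of_mem_left hXY ha]
    refine hG.neighborFinset_eq_of_subset hB hpos fun b hb ↦ ?_
    rw [SimpleGraph.mem_neighborFinset] at hb ⊢
    refine ⟨hb.ne, or_iff_not_imp_left.2 fun haY ↦ .inr ⟨ha, fun hbX ↦ haY ?_⟩⟩
    rw [← hNX hbX, SimpleGraph.mem_neighborFinset]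
    exact hb.symm
  ext a b
  rw [← SimpleGraph.mem_neighborFinset, hN, SimpleGraph.mem_neighborFinset]

lemma eq_BgraphOn_of_adjSpecRad_le (hf : IsNonnegEigenvector G (adjSpecRad G) f)
    (hY : IsHeaviest f Y) (hYne : Y.Nonempty) (hXY : Disjoint X Y)
    (hX : ∀ x ∈ X, G.degree x ≤ #Y) (hB : adjSpecRad (BgraphOn X Y) ≤ adjSpecRad G) :
    G = BgraphOn X Y := by
  have hGB := hf.dotProduct_mulVec_eq.symm.trans_le
    (dotProduct_adjMatrix_mulVec_le_BgraphOn hf.nonneg hY hXY hX)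
  have hupper : adjSpecRad G ∈ upperBounds (spectrum ℝ ((BgraphOn X Y).adjMatrix ℝ)) :=
    fun ν hν ↦ (adjSpecRad_mem_upperBounds_spectrum _ hν).trans hB
  have heig := mulVec_eq_smul_of_le_dotProduct_mulVec
    ((BgraphOn X Y).isHermitian_adjMatrix ℝ) hupper hGB
  have hfB : IsNonnegEigenvector (BgraphOn X Y) (adjSpecRad G) f :=
    ⟨hf.nonneg, hf.ne_zero, fun v ↦ by
      rw [← SimpleGraph.adjMatrix_mulVec_apply, heig, Pi.smul_apply, smul_eq_mul]⟩
  exact eq_BgraphOn_of_isNonnegEigenvector hf hfB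
    (hfB.pos_of_connected (BgraphOn_connected hYne)) hXY hX

end Comparison

section Numerics

lemma add_eight_le_two_mul_of_half_le {t n : ℕ} (hn : (t ^ 2 + 7 * t + 8) / 2 ≤ n) :
    t ^ 2 + 7 * t + 8 ≤ 2 * n := by
  obtain ⟨m, hm⟩ := Nat.even_mul_succ_self t
  have heven : t ^ 2 + 7 * t + 8 = 2 * (m + 3 * t + 4) := by linarith
  rw [heven] at hn ⊢
  lia

lemma two_mul_add_one_mul_sub_le {t h n : ℝ} (hn : 6 * t + 10 ≤ n)
    (hn' : t ^ 2 + 7 * t + 8 ≤ 2 * n) (hth : t + 1 ≤ h) (hhn : 2 * h + 2 ≤ n) :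
    2 * (t + 1) * (n - t - 1) ≤ (h + 1) * (2 * n - 3 * h - 2) := by
  have hmono : 0 ≤ (h - (t + 1)) * (2 * n - 3 * h - 3 * t - 8) :=
    mul_nonneg (by linarith) (by linarith)
  calc 2 * (t + 1) * (n - t - 1)
      ≤ ((t + 1) + 1) * (2 * n - 3 * (t + 1) - 2) := by linarith
    _ ≤ (h + 1) * (2 * n - 3 * h - 2) := by linarith

end Numerics

section SpectralCases

variable {V : Type*} [Fintype V] [DecidableEq V] {G : SimpleGraph V} [DecidableRel G.Adj]
  {n k t : ℕ}

lemma nonempty_iso_Bgraph_of_card_degree_le (hV : Fintype.card V = n) (ht : 1 ≤ t)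
    (hX : t + k ≤ #{v | G.degree v ≤ t}) (hpos : 0 ≤ adjSpecRad G)
    (hlarge : ((n : ℝ) - t + 1) * t < adjSpecRad G * (adjSpecRad G - t + 1))
    (hB : adjSpecRad (Bgraph n k t) ≤ adjSpecRad G) : Nonempty (G ≃g Bgraph n k t) := by
  obtain ⟨X, hXdeg, hXcard⟩ := exists_subset_card_eq hX
  have hdeg (x : V) (hx : x ∈ X) : G.degree x ≤ t := (mem_filter.1 (hXdeg hx)).2
  have htV : t ≤ Fintype.card V := by
    have := card_le_univ X
    lia
  have : Nonempty V := Fintype.card_pos_iff.1 (by lia)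
  obtain ⟨f, hf⟩ := exists_isNonnegEigenvector G
  obtain ⟨Y, hYcard, hY⟩ := exists_isHeaviest hf.nonneg htV
  have hXY : Disjoint X Y := disjoint_left.2 fun x hx hxY ↦ by
    refine hlarge.not_ge ((hYcard ▸ hV ▸ hY.mul_le_mul_degree hf hpos hxY).trans ?_)
    have : (t : ℝ) ≤ n := mod_cast hV ▸ htV
    gcongr
    exact hdeg x hx
  obtain ⟨e⟩ := nonempty_Bgraph_iso_BgraphOn hV hXcard hYcard hXY
  have hG : G = BgraphOn X Y := by
    refine eq_BgraphOn_of_adjSpecRad_le hf hY (card_pos.1 (by lia)) hXY ?_ ?_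
    · exact fun x hx ↦ (hdeg x hx).trans_eq hYcard.symm
    · exact (adjSpecRad_congr e).symm.trans_le hB
  exact ⟨(hG ▸ e).symm⟩

lemma adjSpecRad_le_of_degree_condition {h : ℕ} (hδ : ∀ v, t ≤ G.degree v)
    (hn : 6 * t + 10 ≤ Fintype.card V) (hn' : t ^ 2 + 7 * t + 8 ≤ 2 * Fintype.card V)
    (hth : t < h) (hhn : 2 * h + 2 ≤ Fintype.card V) (hlow : h + 1 ≤ #{v | G.degree v ≤ h})
    (hmid : Fintype.card V - h ≤ #{v | G.degree v + h + 2 ≤ Fintype.card V}) :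
    adjSpecRad G ≤ Fintype.card V - t - 2 := by
  have : Nonempty V := Fintype.card_pos_iff.1 (by lia)
  obtain ⟨f, hf⟩ := exists_isNonnegEigenvector G
  have hsq := hf.sq_sub_mul_le_sum_degree (δ := t) fun v ↦ mod_cast hδ v
  have hsum := sum_degree_le_of_degree_condition hhn hlow hmid
  have hgap : 2 * ((t : ℝ) + 1) * (Fintype.card V - t - 1) ≤
      (h + 1) * (2 * Fintype.card V - 3 * h - 2) := by
    refine two_mul_add_one_mul_sub_le ?_ ?_ ?_ ?_ <;> exact_mod_cast ‹_›
  have hN : 6 * (t : ℝ) + 10 ≤ Fintype.card V := mod_cast hn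
  by_contra! hlt
  have : ((Fintype.card V : ℝ) - t - 2) * (Fintype.card V - t - 2 - (t - 1)) <
      adjSpecRad G * (adjSpecRad G - (t - 1)) :=
    mul_lt_mul'' hlt (by linarith) (by linarith) (by linarith)
  linarith

end SpectralCases

theorem specRad_traceable_LiNing_general {V : Type*} [Fintype V] [DecidableEq V] {t n : ℕ}
    (hV : Fintype.card V = n) (ht : 1 ≤ t)
    (hn : max (6 * t + 10) ((t ^ 2 + 7 * t + 8) / 2) ≤ n)
    (G : SimpleGraph V) [DecidableRel G.Adj] (hmin : ∀ v, t ≤ G.degree v)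
    (hl : adjSpecRad (Bgraph n 1 t) ≤ adjSpecRad G) :
    Traceable G ∨ Nonempty (G ≃g Bgraph n 1 t) := by
  refine or_iff_not_imp_left.2 fun hG ↦ ?_
  obtain ⟨hn₁, hn₂⟩ := max_le_iff.1 hn
  have hlarge : (n : ℝ) - t - 2 < adjSpecRad G := by
    have := lt_adjSpecRad_Bgraph (k := 1) ht (show 2 * t + 1 ≤ n by lia)
    push_cast at this
    linarith
  have : Nonempty V := Fintype.card_pos_iff.1 (by lia)
  obtain ⟨h, hhn, hlow, hmid⟩ := exists_degree_condition_of_not_traceable hG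
  have hht : h ≤ t := by
    subst hV
    by_contra! hth
    exact hlarge.not_ge (adjSpecRad_le_of_degree_condition hmin hn₁
      (add_eight_le_two_mul_of_half_le hn₂) hth hhn hlow hmid)
  obtain ⟨v, hv⟩ := card_pos.1 (h.succ_pos.trans_le hlow)
  obtain rfl : h = t := hht.antisymm ((hmin v).trans (mem_filter.1 hv).2)
  have hn₃ : 6 * (h : ℝ) + 10 ≤ n := mod_cast hn₁
  have hquad : ((n : ℝ) - h + 1) * h < adjSpecRad G * (adjSpecRad G - h + 1) := by nlinarith
  exact nonempty_iso_Bgraph_of_card_degree_le hV ht hlow (by linarith) hquad hl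

/-- **Theorem 1.1** (Li–Ning): spectral radius condition for traceability with minimum
degree at least `t`.  Note that `K_t ∨ (K_{n-2t-1} ∪ (t+1)K₁) = B(n,1,t)`. -/
theorem specRad_traceable_LiNing (t n : ℕ) (ht : 1 ≤ t)
    (hn : max (6 * t + 10) ((t ^ 2 + 7 * t + 8) / 2) ≤ n)
    (G : SimpleGraph (Fin n)) [DecidableRel G.Adj]
    (hmin : ∀ v, t ≤ G.degree v)
    (hl : adjSpecRad (Bgraph n 1 t) ≤ adjSpecRad G) :
    Traceable G ∨ Nonempty (G ≃g Bgraph n 1 t) := by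
  exact specRad_traceable_LiNing_general (Fintype.card_fin n) ht hn G hmin hl
end

section
/- Let k ≥ 1 and δ ≥ 2 be integers. Let G be a connected simple graph on n ≥ max{δ²(δ+k) + δ + k + 5, 5k + 6δ + 6} vertices with minimum degree δ(G) ≥ δ. If the adjacency spectral radius satisfies λ(G) ≥ n − δ − k − 1, then G is k-path-coverable, unless G = B(n,k,δ). -/
open Finset Matrix

/-! Put `q = n - δ - k - 1`. Suppose that `G` has no cover by `k` paths, and add edges, preserving
this, until any two non-adjacent vertices have degree sum less than `n - k` (the Bondy–Chvátal
closure). A nonnegative vector `y ≠ 0` with `q y ≤ A y` for `G` has the same property for the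
closure `H`. Pairing the inequality with the all-ones vector and with the degrees of `H` gives `H`
so many edges that a non-adjacent pair of maximal degree sum contains a vertex of degree `δ`, that
exactly `δ + k` vertices have degree `δ`, and that the others form a clique. If fewer than `δ`
vertices were universal, the vertices of degree `δ` would have neighbours among themselves, which
saves enough paths to cover `H`. So `H` is `B(n, k, δ)`. If `G` lacked an edge of the large clique
of `H`, then pairing `q y ≤ A y` with the indicator of that clique would force `y = 0`. -/

section Breaks

variable {V : Type*} {G H : SimpleGraph V}

open Classical in
/-- The number of consecutive pairs of a list that are not adjacent in `G`. Cutting the list at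
these breaks leaves `breaks G l + 1` paths of `G`. On two-element lists this is the indicator of
non-adjacency, and is used as such. -/
noncomputable def breaks (G : SimpleGraph V) : List V → ℕ
  | [] => 0
  | [_] => 0
  | a :: b :: l => (if G.Adj a b then 0 else 1) + breaks G (b :: l)

@[simp] lemma breaks_nil : breaks G [] = 0 := rfl

@[simp] lemma breaks_singleton (a : V) : breaks G [a] = 0 := rfl

lemma breaks_cons_cons (a b : V) (l : List V) :
    breaks G (a :: b :: l) = breaks G [a, b] + breaks G (b :: l) := by
  simp [breaks]

lemma breaks_pair_of_adj {a b : V} (h : G.Adj a b) : breaks G [a, b] = 0 := by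
  simp [breaks, h]

lemma breaks_pair_of_not_adj {a b : V} (h : ¬G.Adj a b) : breaks G [a, b] = 1 := by
  simp [breaks, h]

lemma breaks_pair_le_one (a b : V) : breaks G [a, b] ≤ 1 := by
  by_cases h : G.Adj a b <;> simp [breaks, h]

lemma breaks_pair_comm (a b : V) : breaks G [a, b] = breaks G [b, a] := by
  by_cases h : G.Adj a b <;> simp [breaks, h, G.adj_comm b a]

lemma breaks_append {P Q : List V} {p q : V} (hp : p ∈ P.getLast?) (hq : q ∈ Q.head?) :
    breaks G (P ++ Q) = breaks G P + breaks G [p, q] + breaks G Q := by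
  induction P using List.twoStepInduction with
  | nil => simp at hp
  | singleton a =>
    obtain ⟨Q, rfl⟩ := List.head?_eq_some_iff.1 hq
    obtain rfl : a = p := by simpa using hp
    rw [List.singleton_append, breaks_cons_cons, breaks_singleton, zero_add]
  | cons_cons a b P _ ih =>
    have ih := ih b (by simpa using hp)
    rw [List.cons_append] at ih
    rw [List.cons_append, List.cons_append, breaks_cons_cons, breaks_cons_cons a b P]
    omega

lemma breaks_append_le (P Q : List V) : breaks G (P ++ Q) ≤ breaks G P + breaks G Q + 1 := by
  rcases P.eq_nil_or_concat with rfl | ⟨P, p, rfl⟩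
  · simp
  · cases Q with
    | nil => simp
    | cons q Q =>
      rw [breaks_append (p := p) (q := q) (by simp) (by simp)]
      have := breaks_pair_le_one (G := G) p q
      omega

lemma breaks_reverse (l : List V) : breaks G l.reverse = breaks G l := by
  induction l using List.twoStepInduction with
  | nil => rfl
  | singleton a => rfl
  | cons_cons a b l _ ih =>
    rw [List.reverse_cons, breaks_append (p := b) (q := a) (by simp) (by simp), ih,
      breaks_cons_cons a, breaks_pair_comm b, breaks_singleton]
    omega

lemma breaks_map {W : Type*} (f : W → V) (l : List W) :
    breaks G (l.map f) = breaks (G.comap f) l := by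
  induction l using List.twoStepInduction with
  | nil => rfl
  | singleton a => rfl
  | cons_cons a b l _ ih =>
    rw [List.map_cons, List.map_cons, breaks_cons_cons, breaks_cons_cons a, ← ih b]
    rfl

lemma exists_lt_of_breaks_lt {l : List V} (h : breaks H l < breaks G l) :
    ∃ P Q a b, l = P ++ Q ∧ a ∈ P.getLast? ∧ b ∈ Q.head? ∧ H.Adj a b ∧ ¬G.Adj a b := by
  induction l using List.twoStepInduction with
  | nil => simp at h
  | singleton a => simp at h
  | cons_cons a b l _ ih =>
    by_cases hab : H.Adj a b ∧ ¬G.Adj a b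
    · exact ⟨[a], b :: l, a, b, rfl, by simp, by simp, hab⟩
    · have : breaks G [a, b] ≤ breaks H [a, b] := by
        by_cases hG : G.Adj a b
        · simp [breaks_pair_of_adj hG]
        · rw [breaks_pair_of_not_adj fun hH ↦ hab ⟨hH, hG⟩]
          exact breaks_pair_le_one a b
      rw [breaks_cons_cons, breaks_cons_cons (G := G)] at h
      obtain ⟨P, Q, x, y, hl, hx, hy, hxy⟩ := ih b (by omega)
      refine ⟨a :: P, Q, x, y, by simp [hl], ?_, hy, hxy⟩
      exact List.mem_getLast?_append_of_mem_getLast? (l₁ := [a]) hx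

lemma breaks_le_of_forall_mem {l : List V} (h : ∀ a ∈ l, ∀ b ∈ l, H.Adj a b → G.Adj a b) :
    breaks G l ≤ breaks H l := by
  by_contra! hlt
  obtain ⟨P, Q, a, b, rfl, ha, hb, hH, hG⟩ := exists_lt_of_breaks_lt hlt
  exact hG <| h a (by simp [List.mem_of_mem_getLast? ha]) b (by simp [List.mem_of_mem_head? hb]) hH

lemma breaks_top {l : List V} (hl : l.Nodup) : breaks (⊤ : SimpleGraph V) l = 0 := by
  induction l using List.twoStepInduction with
  | nil => rfl
  | singleton a => rfl
  | cons_cons a b l _ ih =>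
    rw [breaks_cons_cons, ih b hl.of_cons, breaks_pair_of_adj]
    rintro rfl
    simp at hl

lemma exists_not_adj_of_breaks_pos {l : List V} (hl : l.Nodup) (h : 0 < breaks G l) :
    ∃ P Q a b, l = P ++ Q ∧ a ∈ P.getLast? ∧ b ∈ Q.head? ∧ ¬G.Adj a b := by
  rw [← breaks_top hl] at h
  obtain ⟨P, Q, a, b, hPQ, ha, hb, -, hab⟩ := exists_lt_of_breaks_lt h
  exact ⟨P, Q, a, b, hPQ, ha, hb, hab⟩

lemma isChain_of_breaks_eq_zero {l : List V} (h : breaks G l = 0) : l.IsChain G.Adj := by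
  induction l using List.twoStepInduction with
  | nil => exact .nil
  | singleton a => exact .singleton a
  | cons_cons a b l _ ih =>
    rw [breaks_cons_cons, Nat.add_eq_zero_iff] at h
    refine .cons_cons ?_ (ih b h.2)
    by_contra hab
    simp [breaks_pair_of_not_adj hab] at h

lemma exists_flatten_eq_forall_isChain {l : List V} (hl : l.Nodup) (hne : l ≠ []) :
    ∃ L : List (List V), L.flatten = l ∧ L.length = breaks G l + 1 ∧
      ∀ p ∈ L, p ≠ [] ∧ p.IsChain G.Adj := by
  induction hm : breaks G l using Nat.strong_induction_on generalizing l with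
  | _ m ih =>
    subst hm
    rcases Nat.eq_zero_or_pos (breaks G l) with h0 | hpos
    · exact ⟨[l], by simp [h0, hne, isChain_of_breaks_eq_zero]⟩
    · obtain ⟨P, Q, a, b, rfl, ha, hb, hab⟩ := exists_not_adj_of_breaks_pos hl hpos
      have hbreaks := breaks_append (G := G) ha hb
      rw [breaks_pair_of_not_adj hab] at hbreaks
      obtain ⟨LP, rfl, hlenP, hchainP⟩ :=
        ih _ (by omega) hl.of_append_left (List.ne_nil_of_mem (List.mem_of_mem_getLast? ha)) rfl
      obtain ⟨LQ, rfl, hlenQ, hchainQ⟩ :=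
        ih _ (by omega) hl.of_append_right (List.ne_nil_of_mem (List.mem_of_mem_head? hb)) rfl
      refine ⟨LP ++ LQ, List.flatten_append, ?_, fun p hp ↦ ?_⟩
      · rw [List.length_append, hlenP, hlenQ, hbreaks]
        omega
      · exact (List.mem_append.1 hp).elim (hchainP p) (hchainQ p)

end Breaks

/-! ### Covering a set of vertices by paths -/

section PathCoverableOn

variable {V : Type*} {G : SimpleGraph V} {s t : Finset V} {j k : ℕ}

/-- The subgraph of `G` induced on `s` can be covered by at most `k` vertex-disjoint paths. The
paths are encoded by one list of the elements of `s`, to be cut at its breaks. -/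
def PathCoverableOn (G : SimpleGraph V) (s : Finset V) (k : ℕ) : Prop :=
  ∃ l : List V, (l : Multiset V) = s.val ∧ breaks G l < k

namespace PathCoverableOn

lemma mono (h : PathCoverableOn G s j) (hjk : j ≤ k) : PathCoverableOn G s k := by
  obtain ⟨l, hl, hbreaks⟩ := h
  exact ⟨l, hl, hbreaks.trans_le hjk⟩

lemma pos (h : PathCoverableOn G s k) : 0 < k := by
  obtain ⟨l, -, hbreaks⟩ := h
  exact Nat.zero_lt_of_lt hbreaks

lemma union [DecidableEq V] (hs : PathCoverableOn G s j) (ht : PathCoverableOn G t k)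
    (hst : Disjoint s t) : PathCoverableOn G (s ∪ t) (j + k) := by
  obtain ⟨l, hl, hbreaks⟩ := hs
  obtain ⟨l', hl', hbreaks'⟩ := ht
  refine ⟨l ++ l', ?_, ?_⟩
  · rw [← Multiset.coe_add, hl, hl', ← Finset.disjUnion_eq_union s t hst]
    rfl
  · have := breaks_append_le (G := G) l l'
    omega

lemma of_isClique (hs : G.IsClique s) : PathCoverableOn G s 1 := by
  refine ⟨s.toList, s.coe_toList, ?_⟩
  have hle : breaks G s.toList ≤ breaks ⊤ s.toList :=
    breaks_le_of_forall_mem fun a ha b hb hab ↦ hs (by simpa using ha) (by simpa using hb) hab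
  rw [breaks_top s.nodup_toList] at hle
  omega

lemma insert_of_forall_adj [DecidableEq V] {d : V} (h : PathCoverableOn G s (k + 1)) (hk : 1 ≤ k)
    (hd : d ∉ s) (hadj : ∀ v ∈ s, G.Adj d v) : PathCoverableOn G (insert d s) k := by
  obtain ⟨l, hl, hbreaks⟩ := h
  have hmem (v : V) : v ∈ l ↔ v ∈ s := by rw [← Multiset.mem_coe, hl, mem_val]
  have hnd : l.Nodup := by rw [← Multiset.coe_nodup, hl]; exact s.nodup
  have hcons {Q : List V} (hQ : ∀ v ∈ Q, v ∈ l) : breaks G (d :: Q) = breaks G Q := by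
    cases Q with
    | nil => rfl
    | cons q Q =>
      rw [breaks_cons_cons, breaks_pair_of_adj (hadj q ((hmem q).1 (hQ q (by simp)))), zero_add]
  rw [PathCoverableOn, insert_val_of_notMem hd, ← hl]
  rcases Nat.eq_zero_or_pos (breaks G l) with h0 | hpos
  · exact ⟨d :: l, rfl, by rw [hcons fun v hv ↦ hv, h0]; exact hk⟩
  · obtain ⟨P, Q, a, b, rfl, ha, hb, hab⟩ := exists_not_adj_of_breaks_pos hnd hpos
    have had : G.Adj a d :=
      (hadj a ((hmem a).1 (List.mem_append_left Q (List.mem_of_mem_getLast? ha)))).symm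
    refine ⟨P ++ d :: Q, Multiset.coe_eq_coe.2 List.perm_middle, ?_⟩
    rw [breaks_append ha hb, breaks_pair_of_not_adj hab] at hbreaks
    rw [breaks_append ha rfl, breaks_pair_of_adj had, hcons fun v hv ↦ List.mem_append_right P hv]
    omega

lemma union_of_forall_adj [DecidableEq V] {D : Finset V} (h : PathCoverableOn G s (k + #D))
    (hk : 1 ≤ k) (hD : Disjoint D s) (hadj : ∀ d ∈ D, ∀ v, d ≠ v → G.Adj d v) :
    PathCoverableOn G (D ∪ s) k := by
  induction D using Finset.induction_on generalizing k with
  | empty => simpa using h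
  | insert d D hdD ih =>
    rw [card_insert_of_notMem hdD, ← add_assoc, add_right_comm] at h
    rw [disjoint_insert_left] at hD
    have hd : d ∉ D ∪ s := by simp [hdD, hD.1]
    rw [insert_union]
    exact (ih h k.succ_pos hD.2 fun x hx ↦ hadj x (mem_insert_of_mem hx)).insert_of_forall_adj
      hk hd fun v hv ↦ hadj d (mem_insert_self d D) v (ne_of_mem_of_not_mem hv hd).symm

lemma of_induce (h : PathCoverableOn (G.induce (s : Set V)) univ k) : PathCoverableOn G s k := by
  obtain ⟨l, hl, hbreaks⟩ := h
  refine ⟨l.map (↑), ?_, ?_⟩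
  · rw [← Multiset.map_coe, hl]
    exact Multiset.attach_map_val s.val
  · rwa [breaks_map]

lemma pathCoverable [Fintype V] (h : PathCoverableOn G univ k) : PathCoverable G k := by
  obtain ⟨l, hl, hbreaks⟩ := h
  have hmem (v : V) : v ∈ l := by rw [← Multiset.mem_coe, hl]; exact mem_univ v
  have hnd : l.Nodup := by rw [← Multiset.coe_nodup, hl]; exact univ.nodup
  rcases eq_or_ne l [] with rfl | hne
  · exact ⟨0, Fin.elim0, k.zero_le, Fin.rec0, fun v ↦ by simpa using hmem v, Fin.rec0⟩
  obtain ⟨L, rfl, hlen, hL⟩ := exists_flatten_eq_forall_isChain (G := G) hnd hne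
  rw [List.nodup_flatten] at hnd
  have hget (i : Fin L.length) := hL (L.get i) (L.get_mem i)
  refine ⟨L.length, fun i ↦ ⟨_, _, SimpleGraph.Walk.ofSupport _ (hget i).1 (hget i).2⟩, by omega,
    fun i ↦ ?_, fun v ↦ ?_, fun i j hij v hi hj ↦ ?_⟩
  · rw [SimpleGraph.Walk.isPath_def, SimpleGraph.Walk.support_ofSupport]
    exact hnd.1 _ (L.get_mem i)
  · obtain ⟨p, hp, hv⟩ := List.mem_flatten.1 (hmem v)
    obtain ⟨i, rfl⟩ := List.mem_iff_get.1 hp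
    exact ⟨i, by rwa [SimpleGraph.Walk.support_ofSupport]⟩
  · rw [SimpleGraph.Walk.support_ofSupport] at hi hj
    rcases lt_or_gt_of_ne hij with h | h
    · exact List.pairwise_iff_get.1 hnd.2 i j h hi hj
    · exact List.pairwise_iff_get.1 hnd.2 j i h hj hi

end PathCoverableOn

end PathCoverableOn

/-! ### Bondy–Chvátal closure for path covers -/

section Ore

variable {V : Type*} {G : SimpleGraph V} {k : ℕ}

lemma PathCoverableOn.of_breaks_cyclic_le {s : Finset V} {l : List V} {a b : V}
    (hl : (l : Multiset V) = s.val) (ha : a ∈ l.head?) (hb : b ∈ l.getLast?) (hk : 1 ≤ k)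
    (h : breaks G l + breaks G [b, a] ≤ k) : PathCoverableOn G s k := by
  rcases Nat.lt_or_ge (breaks G l) k with hlt | hge
  · exact ⟨l, hl, hlt⟩
  have hnd : l.Nodup := by rw [← Multiset.coe_nodup, hl]; exact s.nodup
  obtain ⟨P, Q, p, q, rfl, hp, hq, hpq⟩ :=
    exists_not_adj_of_breaks_pos (G := G) hnd (by omega)
  have hP : P ≠ [] := List.ne_nil_of_mem (List.mem_of_mem_getLast? hp)
  have hQ : Q ≠ [] := List.ne_nil_of_mem (List.mem_of_mem_head? hq)
  rw [List.head?_append_of_ne_nil P hP] at ha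
  rw [List.getLast?_append_of_ne_nil P hQ] at hb
  refine ⟨Q ++ P, by rw [← hl, Multiset.coe_eq_coe]; exact List.perm_append_comm, ?_⟩
  rw [breaks_append hp hq, breaks_pair_of_not_adj hpq] at h
  rw [breaks_append hb ha]
  omega

/-- Reverse the final segment starting at `b`, and close up at the edge from `b` to the head. -/
lemma breaks_lt_of_not_pathCoverableOn {s : Finset V} {P Q : List V} {a b x y : V}
    (hl : ((P ++ Q : List V) : Multiset V) = s.val) (hbreaks : breaks G (P ++ Q) ≤ k) (hk : 1 ≤ k)
    (hG : ¬PathCoverableOn G s k) (hy : y ∈ (P ++ Q).head?) (hx : x ∈ (P ++ Q).getLast?)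
    (ha : a ∈ P.getLast?) (hb : b ∈ Q.head?) :
    breaks G [a, b] < breaks G [a, x] + breaks G [b, y] := by
  have hP : P ≠ [] := List.ne_nil_of_mem (List.mem_of_mem_getLast? ha)
  have hQ : Q ≠ [] := List.ne_nil_of_mem (List.mem_of_mem_head? hb)
  rw [List.head?_append_of_ne_nil P hP] at hy
  rw [List.getLast?_append_of_ne_nil P hQ, ← List.head?_reverse] at hx
  by_contra! hle
  refine hG (.of_breaks_cyclic_le (l := P ++ Q.reverse) (a := y) (b := b) ?_ ?_ ?_ hk ?_)
  · rw [← hl, Multiset.coe_eq_coe]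
    exact (List.reverse_perm Q).append_left P
  · rwa [List.head?_append_of_ne_nil P hP]
  · rwa [List.getLast?_append_of_ne_nil P (by simpa using hQ), List.getLast?_reverse]
  · rw [breaks_append ha hb] at hbreaks
    rw [breaks_append ha hx, breaks_reverse]
    omega

lemma countP_adj_add_breaks_lt_length [DecidableRel G.Adj] {l : List V} (hne : l ≠ []) (x y : V)
    (h : ∀ P Q a b, l = P ++ Q → a ∈ P.getLast? → b ∈ Q.head? →
      breaks G [a, b] < breaks G [a, x] + breaks G [b, y]) :
    l.dropLast.countP (G.Adj x) + l.tail.countP (G.Adj y) + breaks G l < l.length := by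
  induction l using List.twoStepInduction with
  | nil => simp at hne
  | singleton a => simp
  | cons_cons a b l _ ih =>
    have hab := h [a] (b :: l) a b rfl rfl rfl
    have ih := ih b (by simp) fun P Q p q hPQ hp hq ↦ h (a :: P) Q p q (by simp [hPQ])
      (List.mem_getLast?_append_of_mem_getLast? (l₁ := [a]) hp) hq
    have hind (u v : V) : (if G.Adj u v then 1 else 0) + breaks G [v, u] = 1 := by
      by_cases huv : G.Adj u v
      · simp [huv, breaks_pair_of_adj huv.symm]
      · simp [huv, breaks_pair_of_not_adj fun hvu ↦ huv hvu.symm]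
    have hxa := hind x a
    have hyb := hind y b
    simp only [List.dropLast_cons_cons, List.tail_cons, List.countP_cons, List.length_cons,
      decide_eq_true_eq, breaks_cons_cons a b l] at ih ⊢
    omega

variable [Fintype V]

lemma countP_adj_eq_degree_s3 [DecidableRel G.Adj] {l : List V} (hl : (l : Multiset V) = univ.val)
    (v : V) : l.countP (G.Adj v) = G.degree v := by
  rw [← Multiset.coe_countP, hl, ← G.card_neighborFinset_eq_degree, G.neighborFinset_eq_filter]
  exact Multiset.countP_eq_card_filter _ _

lemma degree_add_degree_add_lt_card_of_breaks_le [DecidableRel G.Adj] {l : List V} {x y : V}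
    (hl : (l : Multiset V) = univ.val) (hy : y ∈ l.head?) (hx : x ∈ l.getLast?)
    (hbreaks : breaks G l ≤ k) (hk : 1 ≤ k) (hG : ¬PathCoverableOn G univ k) :
    G.degree x + G.degree y + k < Fintype.card V := by
  have hlen : l.length = Fintype.card V := by rw [← Multiset.coe_card, hl]; rfl
  have hge : k ≤ breaks G l := not_lt.1 fun hlt ↦ hG ⟨l, hl, hlt⟩
  have hcount := countP_adj_add_breaks_lt_length (List.ne_nil_of_mem (List.mem_of_mem_head? hy)) x y
    fun P Q a b hPQ ha hb ↦ by
      subst hPQ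
      exact breaks_lt_of_not_pathCoverableOn hl hbreaks hk hG hy hx ha hb
  have hdegx : l.dropLast.countP (G.Adj x) = G.degree x := by
    rw [← countP_adj_eq_degree_s3 hl, ← List.dropLast_append_getLast? x hx]
    simp
  have hdegy : l.tail.countP (G.Adj y) = G.degree y := by
    rw [← countP_adj_eq_degree_s3 hl]
    obtain ⟨l, rfl⟩ := List.head?_eq_some_iff.1 hy
    simp
  omega

lemma degree_add_degree_add_lt_card_of_sup_edge [DecidableRel G.Adj] {u v : V}
    (hG : ¬PathCoverableOn G univ k) (h : PathCoverableOn (G ⊔ SimpleGraph.edge u v) univ k) :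
    G.degree u + G.degree v + k < Fintype.card V := by
  have hk := h.pos
  obtain ⟨l, hl, hlt⟩ := h
  have hnd : l.Nodup := by rw [← Multiset.coe_nodup, hl]; exact univ.nodup
  have hge : k ≤ breaks G l := not_lt.1 fun hlt ↦ hG ⟨l, hl, hlt⟩
  obtain ⟨P, Q, a, b, rfl, ha, hb, hadj, hnadj⟩ := exists_lt_of_breaks_lt (hlt.trans_le hge)
  rw [breaks_append ha hb, breaks_pair_of_adj hadj] at hlt
  have huv : a = u ∧ b = v ∨ a = v ∧ b = u := by
    simp only [SimpleGraph.sup_adj, SimpleGraph.edge_adj] at hadj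
    tauto
  have hmem {z w : V} (hzw : (G ⊔ SimpleGraph.edge u v).Adj z w) :
      G.Adj z w ∨ z = a ∧ w = b ∨ z = b ∧ w = a := by
    rw [SimpleGraph.sup_adj, SimpleGraph.edge_adj] at hzw
    grind
  have hdisj := (List.nodup_append.1 hnd).2.2
  have haP : a ∈ P := List.mem_of_mem_getLast? ha
  have hbQ : b ∈ Q := List.mem_of_mem_head? hb
  have hP : breaks G P ≤ breaks (G ⊔ SimpleGraph.edge u v) P :=
    breaks_le_of_forall_mem fun z hz w hw hzw ↦ (hmem hzw).resolve_right (by grind)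
  have hQ : breaks G Q ≤ breaks (G ⊔ SimpleGraph.edge u v) Q :=
    breaks_le_of_forall_mem fun z hz w hw hzw ↦ (hmem hzw).resolve_right (by grind)
  have hQP := breaks_append_le (G := G) Q P
  have hab : G.degree a + G.degree b + k < Fintype.card V :=
    degree_add_degree_add_lt_card_of_breaks_le (l := Q ++ P)
      (by rw [← hl, Multiset.coe_eq_coe]; exact List.perm_append_comm)
      (List.mem_head?_append_of_mem_head? hb) (List.mem_getLast?_append_of_mem_getLast? ha)
      (by omega) hk hG
  rcases huv with ⟨rfl, rfl⟩ | ⟨rfl, rfl⟩ <;> omega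

lemma exists_saturated (hG : ¬PathCoverableOn G univ k) :
    ∃ (H : SimpleGraph V) (_ : DecidableRel H.Adj), G ≤ H ∧ ¬PathCoverableOn H univ k ∧
      ∀ ⦃u v⦄, Hᶜ.Adj u v → H.degree u + H.degree v + k < Fintype.card V := by
  classical
  obtain ⟨H, hGH, hH⟩ :=
    (Set.toFinite {H : SimpleGraph V | ¬PathCoverableOn H univ k}).exists_le_maximal hG
  refine ⟨H, inferInstance, hGH, hH.prop, fun u v huv ↦ ?_⟩
  rw [SimpleGraph.compl_adj] at huv
  refine degree_add_degree_add_lt_card_of_sup_edge hH.prop ?_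
  by_contra hcov
  refine huv.2 (hH.le_of_ge (y := H ⊔ SimpleGraph.edge u v) hcov le_sup_left ?_)
  simp [SimpleGraph.edge_adj, huv.1]

namespace PathCoverableOn

lemma of_card_le_degree_add_degree [DecidableRel G.Adj] (hk : 1 ≤ k)
    (h : ∀ ⦃u v⦄, Gᶜ.Adj u v → Fintype.card V ≤ G.degree u + G.degree v + k) :
    PathCoverableOn G univ k := by
  by_contra hG
  obtain ⟨H, _, hGH, hH, hdeg⟩ := exists_saturated hG
  refine hH (mono (of_isClique fun u _ v _ huv ↦ ?_) hk)
  by_contra hnadj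
  have hle := h ⟨huv, fun hadj ↦ hnadj (hGH hadj)⟩
  have hlt := hdeg ⟨huv, hnadj⟩
  have hu : G.degree u ≤ H.degree u := SimpleGraph.degree_le_of_le hGH
  have hv : G.degree v ≤ H.degree v := SimpleGraph.degree_le_of_le hGH
  omega

lemma of_le_card_neighborFinset_inter [DecidableEq V] [DecidableRel G.Adj] {s : Finset V} {r : ℕ}
    (hk : 1 ≤ k) (hs : #s ≤ 2 * r + k) (h : ∀ v ∈ s, r ≤ #(G.neighborFinset v ∩ s)) :
    PathCoverableOn G s k := by
  have hdeg (v : (s : Set V)) : r ≤ (G.induce (s : Set V)).degree v := by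
    have hmap : ((G.induce (s : Set V)).neighborFinset v).map (.subtype (· ∈ (s : Set V))) =
        G.neighborFinset v ∩ s := by
      ext
      simp
    rw [← SimpleGraph.card_neighborFinset_eq_degree, ← card_map, hmap]
    exact h v v.2
  refine of_induce (of_card_le_degree_add_degree hk fun u v _ ↦ ?_)
  have hu := hdeg u
  have hv := hdeg v
  have hcard : Fintype.card (s : Set V) = #s := Fintype.card_coe s
  omega

/-- Absorb the dominating vertices `D` into a cover of `L` by `k + #D - 1` paths together with one
path through the clique on the remaining vertices. -/
lemma of_dominating [DecidableEq V] [DecidableRel G.Adj] {D L : Finset V} {r : ℕ}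
    (hk : 1 ≤ k) (hkD : 2 ≤ k + #D) (hD : ∀ d ∈ D, ∀ v, d ≠ v → G.Adj d v) (hDL : Disjoint D L)
    (hclique : G.IsClique (Lᶜ : Finset V)) (hr : 1 ≤ r) (hL : #L ≤ k + #D + r)
    (hLr : ∀ v ∈ L, r ≤ #(G.neighborFinset v ∩ L)) : PathCoverableOn G univ k := by
  have hcovL : PathCoverableOn G L (k + #D - 1) :=
    of_le_card_neighborFinset_inter (by omega) (by omega) hLr
  have hcovK : PathCoverableOn G (L ∪ D)ᶜ 1 :=
    of_isClique (hclique.subset (by simp))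
  have hcov := hcovL.union hcovK (disjoint_compl_right.mono_left subset_union_left)
  rw [Nat.sub_add_cancel (by omega)] at hcov
  have hdisj : Disjoint D (L ∪ (L ∪ D)ᶜ) :=
    disjoint_union_right.2 ⟨hDL, disjoint_compl_right.mono_left subset_union_right⟩
  have huniv : D ∪ (L ∪ (L ∪ D)ᶜ) = univ := by
    rw [← union_assoc, union_comm D L, union_compl]
  exact huniv ▸ hcov.union_of_forall_adj hk hdisj hD

end PathCoverableOn

end Ore

/-! ### Subinvariant vectors -/

section Spectral

variable {V : Type*} [Fintype V] {G H : SimpleGraph V} [DecidableRel G.Adj] [DecidableRel H.Adj]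
  {μ : ℝ} {y : V → ℝ}

/-- A nonzero nonnegative vector `y` with `μ y ≤ A(G) y` entrywise. Such a vector exists whenever
`0 < μ ≤ λ(G)` and remains one for every supergraph of `G`, so no Perron vector is needed. -/
structure IsSubinvariant (G : SimpleGraph V) [DecidableRel G.Adj] (μ : ℝ) (y : V → ℝ) : Prop where
  nonneg : 0 ≤ y
  ne_zero : y ≠ 0
  smul_le : μ • y ≤ G.adjMatrix ℝ *ᵥ y

lemma exists_isSubinvariant_of_le_adjSpecRad [DecidableEq V] (hμ : 0 < μ) (h : μ ≤ adjSpecRad G) :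
    ∃ y, IsSubinvariant G μ y := by
  set S := {μ : ℝ | ∃ x : V → ℝ, x ≠ 0 ∧ G.adjMatrix ℝ *ᵥ x = μ • x} with hS
  have hfin : S.Finite := by
    refine (Module.End.finite_hasEigenvalue (Matrix.toLin' (G.adjMatrix ℝ))).subset ?_
    rintro ν ⟨x, hx, hxν⟩
    exact Module.End.hasEigenvalue_of_hasEigenvector
      ⟨Module.End.mem_eigenspace_iff.2 (by simpa using hxν), hx⟩
  have hne : S.Nonempty := by
    rw [Set.nonempty_iff_ne_empty]
    intro hempty
    rw [adjSpecRad, ← hS, hempty, Real.sSup_empty] at h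
    exact hμ.not_ge h
  obtain ⟨x, hx, hxμ⟩ : adjSpecRad G ∈ S := hne.csSup_mem hfin
  refine ⟨|x|, abs_nonneg x, by simpa using hx, fun v ↦ ?_⟩
  calc μ * |x v| ≤ adjSpecRad G * |x v| := by gcongr
    _ = |adjSpecRad G * x v| := by rw [abs_mul, abs_of_pos (hμ.trans_le h)]
    _ = |∑ w ∈ G.neighborFinset v, x w| := by
      rw [← G.adjMatrix_mulVec_apply, hxμ, Pi.smul_apply, smul_eq_mul]
    _ ≤ ∑ w ∈ G.neighborFinset v, |x w| := abs_sum_le_sum_abs _ _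
    _ = (G.adjMatrix ℝ *ᵥ |x|) v := by rw [G.adjMatrix_mulVec_apply]; rfl

lemma card_neighborFinset_inter_lt [DecidableEq V] {s : Finset V} {v : V} (hv : v ∈ s) :
    #(G.neighborFinset v ∩ s) < #s :=
  card_lt_card <| inter_subset_right.ssubset_of_mem_notMem hv (by simp)

lemma card_neighborFinset_inter_add_one_lt [DecidableEq V] {s : Finset V} {v w : V} (hv : v ∈ s)
    (hw : w ∈ s) (hvw : Gᶜ.Adj v w) : #(G.neighborFinset v ∩ s) + 1 < #s := by
  rw [← card_insert_of_notMem (a := w) (by simp [hvw.2])]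
  refine card_lt_card <| (insert_subset hw inter_subset_right).ssubset_of_mem_notMem hv ?_
  simp [hvw.ne]

lemma card_neighborFinset_inter_add_ite_lt [DecidableEq V] {s : Finset V} {a b v : V} (hv : v ∈ s)
    (ha : a ∈ s) (hb : b ∈ s) (hab : Gᶜ.Adj a b) :
    #(G.neighborFinset v ∩ s) + ((if v = a then 1 else 0) + if v = b then 1 else 0) < #s := by
  rcases eq_or_ne v a with rfl | hva
  · simpa [hab.ne] using card_neighborFinset_inter_add_one_lt hv hb hab
  rcases eq_or_ne v b with rfl | hvb
  · simpa [hva] using card_neighborFinset_inter_add_one_lt hv ha hab.symm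
  · simpa [hva, hvb] using card_neighborFinset_inter_lt hv

namespace IsSubinvariant

lemma mul_apply_le (hy : IsSubinvariant G μ y) (v : V) :
    μ * y v ≤ ∑ w ∈ G.neighborFinset v, y w := by
  rw [← G.adjMatrix_mulVec_apply]
  exact hy.smul_le v

lemma sum_pos (hy : IsSubinvariant G μ y) : 0 < ∑ v, y v := by
  obtain ⟨v, hv⟩ := Function.ne_iff.1 hy.ne_zero
  exact Finset.sum_pos' (fun w _ ↦ hy.nonneg w) ⟨v, mem_univ v, (hy.nonneg v).lt_of_ne' hv⟩

lemma mono (hy : IsSubinvariant G μ y) (hGH : G ≤ H) : IsSubinvariant H μ y := by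
  refine ⟨hy.nonneg, hy.ne_zero, fun v ↦ (hy.smul_le v).trans ?_⟩
  rw [G.adjMatrix_mulVec_apply, H.adjMatrix_mulVec_apply]
  refine sum_le_sum_of_subset_of_nonneg (fun w hw ↦ ?_) fun w _ _ ↦ hy.nonneg w
  rw [SimpleGraph.mem_neighborFinset] at hw ⊢
  exact hGH hw

lemma mul_dotProduct_le (hy : IsSubinvariant G μ y) {c : V → ℝ} (hc : 0 ≤ c) :
    μ * (c ⬝ᵥ y) ≤ (G.adjMatrix ℝ *ᵥ c) ⬝ᵥ y := by
  rw [← smul_eq_mul, ← dotProduct_smul, ← vecMul_transpose, G.transpose_adjMatrix,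
    ← dotProduct_mulVec]
  exact dotProduct_le_dotProduct_of_nonneg_left hy.smul_le hc

/-- Test against the vectors `1` and `deg - (δ - 1)`. The image of the latter under the adjacency
matrix is at most `∑ deg - (n - 1) δ` at every vertex. -/
lemma mul_sub_le_sum_degree (hy : IsSubinvariant G μ y) (hμ : 0 ≤ μ) {δ : ℝ}
    (hδ : ∀ v, δ ≤ G.degree v) :
    μ * (μ - δ + 1) ≤ ∑ v, (G.degree v : ℝ) - (Fintype.card V - 1) * δ := by
  classical
  set c : V → ℝ := fun v ↦ (G.degree v - δ) + 1 with hc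
  set R : ℝ := ∑ v, (G.degree v : ℝ) - (Fintype.card V - 1) * δ
  have hAc : G.adjMatrix ℝ *ᵥ c ≤ fun _ ↦ R := by
    intro v
    have hR : R = ∑ w, (G.degree w - δ) + δ := by
      simp only [sum_sub_distrib, sum_const, card_univ, nsmul_eq_mul, R]
      ring
    have hsub : ∑ w ∈ insert v (G.neighborFinset v), (G.degree w - δ) ≤ ∑ w, (G.degree w - δ) :=
      sum_le_univ_sum_of_nonneg fun w ↦ sub_nonneg.2 (hδ w)
    rw [sum_insert (G.notMem_neighborFinset_self v)] at hsub
    rw [G.adjMatrix_mulVec_apply, hR, hc, sum_add_distrib, sum_const, nsmul_eq_mul, mul_one,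
      G.card_neighborFinset_eq_degree]
    linarith
  have hcy : (μ - δ + 1) * ∑ v, y v ≤ c ⬝ᵥ y := by
    have h1 := hy.mul_dotProduct_le (c := 1) zero_le_one
    have hdeg : G.adjMatrix ℝ *ᵥ 1 = fun v ↦ (G.degree v : ℝ) := by
      ext v
      simp [G.adjMatrix_mulVec_apply]
    have hsplit : c ⬝ᵥ y = (fun v ↦ (G.degree v : ℝ)) ⬝ᵥ y - (δ - 1) * ∑ v, y v := by
      simp only [dotProduct, mul_sum, ← sum_sub_distrib, hc]
      exact sum_congr rfl fun v _ ↦ by ring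
    rw [hdeg, one_dotProduct] at h1
    rw [hsplit]
    linarith
  refine le_of_mul_le_mul_right ?_ hy.sum_pos
  calc μ * (μ - δ + 1) * ∑ v, y v ≤ μ * (c ⬝ᵥ y) := by
        rw [mul_assoc]; gcongr
    _ ≤ (G.adjMatrix ℝ *ᵥ c) ⬝ᵥ y := hy.mul_dotProduct_le fun v ↦ by
        have := hδ v
        simp only [Pi.zero_apply, hc]
        linarith
    _ ≤ (fun _ ↦ R) ⬝ᵥ y := dotProduct_le_dotProduct_of_nonneg_right hAc hy.nonneg
    _ = R * ∑ v, y v := by rw [dotProduct, mul_sum]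

lemma mul_sum_le (hy : IsSubinvariant G μ y) {D L : Finset V} {M : ℝ}
    (hL : ∀ v ∈ L, G.neighborFinset v ⊆ D) (hM : ∀ w ∈ D, y w ≤ M) :
    μ * ∑ v ∈ L, y v ≤ #L * (#D * M) := by
  rw [mul_sum, ← nsmul_eq_mul]
  refine sum_le_card_nsmul L _ _ fun v hv ↦ (hy.mul_apply_le v).trans ?_
  calc ∑ w ∈ G.neighborFinset v, y w ≤ ∑ w ∈ D, y w :=
        sum_le_sum_of_subset_of_nonneg (hL v hv) fun w _ _ ↦ hy.nonneg w
    _ ≤ #D * M := by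
        rw [← nsmul_eq_mul]
        exact sum_le_card_nsmul D y M hM

variable {D L : Finset V} {q : ℕ}

/-- Test against the indicator vector of the complement of `L`. -/
lemma apply_add_apply_le (hy : IsSubinvariant G q y) (hL : ∀ v ∈ L, G.neighborFinset v ⊆ D)
    (hcard : Fintype.card V = q + 1 + #L) {a b : V} (ha : a ∉ L) (hb : b ∉ L) (hab : Gᶜ.Adj a b) :
    y a + y b ≤ #D * ∑ v ∈ L, y v := by
  classical
  set c : V → ℝ := fun v ↦ if v ∈ Lᶜ then 1 else 0 with hc
  have hcy : c ⬝ᵥ y = ∑ v ∈ Lᶜ, y v := by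
    simp only [dotProduct, hc, ite_mul, one_mul, zero_mul, sum_ite_mem, univ_inter]
  have hAc (v : V) : (G.adjMatrix ℝ *ᵥ c) v = #(G.neighborFinset v ∩ Lᶜ) := by
    rw [G.adjMatrix_mulVec_apply, sum_ite_mem, sum_const, nsmul_one]
  have hmem {v : V} (hv : v ∈ L) : (G.adjMatrix ℝ *ᵥ c) v ≤ #D := by
    rw [hAc]
    exact_mod_cast card_le_card (inter_subset_left.trans (hL v hv))
  have hnotMem {v : V} (hv : v ∈ Lᶜ) : (G.adjMatrix ℝ *ᵥ c) v ≤
      q - ((if v = a then 1 else 0) + if v = b then 1 else 0) := by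
    have hnat := card_neighborFinset_inter_add_ite_lt hv (mem_compl.2 ha) (mem_compl.2 hb) hab
    rw [card_compl, hcard, Nat.add_sub_cancel, Nat.lt_add_one_iff] at hnat
    rw [hAc, le_sub_iff_add_le]
    exact_mod_cast hnat
  have htest := hy.mul_dotProduct_le (c := c) fun v ↦ by
    simp only [hc, Pi.zero_apply]; split_ifs <;> norm_num
  have hsumL : ∑ v ∈ L, (G.adjMatrix ℝ *ᵥ c) v * y v ≤ #D * ∑ v ∈ L, y v := by
    rw [mul_sum]
    exact sum_le_sum fun v hv ↦ mul_le_mul_of_nonneg_right (hmem hv) (hy.nonneg v)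
  have hsumC : ∑ v ∈ Lᶜ, (G.adjMatrix ℝ *ᵥ c) v * y v ≤ q * ∑ v ∈ Lᶜ, y v - (y a + y b) := by
    refine (sum_le_sum fun v hv ↦ mul_le_mul_of_nonneg_right (hnotMem hv) (hy.nonneg v)).trans_eq ?_
    simp [sub_mul, add_mul, sum_add_distrib, mul_sum, ha, hb]
  rw [hcy, dotProduct, ← sum_add_sum_compl L] at htest
  linarith

lemma two_mul_apply_le (hy : IsSubinvariant G q y) (hL : ∀ v ∈ L, G.neighborFinset v ⊆ D)
    (hcard : Fintype.card V = q + 1 + #L) {a b v : V} (ha : a ∉ L) (hb : b ∉ L)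
    (hab : Gᶜ.Adj a b) (hmax : ∀ w ∉ L, y w ≤ y v) :
    2 * y v ≤ (#D + 1) * ∑ w ∈ L, y w := by
  classical
  have hyab := hy.apply_add_apply_le hL hcard ha hb hab
  have hsum : ∑ w ∈ Lᶜ, y w ≤ y a + y b + (q - 1) * y v := by
    have hpair : ({a, b} : Finset V) ⊆ Lᶜ := by simp [insert_subset_iff, ha, hb]
    have hcardC : #(Lᶜ \ {a, b}) + 1 = q := by
      rw [card_sdiff_of_subset hpair, card_compl, card_pair hab.ne]
      have := card_le_card hpair
      rw [card_compl, card_pair hab.ne] at this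
      omega
    rw [← sum_sdiff hpair, sum_pair hab.ne, ← hcardC, add_comm]
    gcongr
    push_cast
    rw [add_sub_cancel_right, ← nsmul_eq_mul]
    exact sum_le_card_nsmul _ y _ fun w hw ↦ hmax w <| mem_compl.1 (mem_sdiff.1 hw).1
  have hrow : q * y v ≤ ∑ w ∈ Lᶜ, y w - y v + ∑ w ∈ L, y w := by
    have hle : ∑ w ∈ insert v (G.neighborFinset v), y w ≤ ∑ w, y w :=
      sum_le_univ_sum_of_nonneg hy.nonneg
    rw [sum_insert (G.notMem_neighborFinset_self v), ← sum_add_sum_compl L] at hle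
    linarith [hy.mul_apply_le v]
  rw [add_one_mul]
  linarith

/-- If `ab` were missing, the maximum `M` of `y` outside `L` would satisfy
`2 M ≤ (#D + 1) ∑ v ∈ L, y v`, whose right-hand side is of order `M / q`. -/
lemma adj_of_notMem (hy : IsSubinvariant G q y) (hDL : Disjoint D L)
    (hL : ∀ v ∈ L, G.neighborFinset v ⊆ D) (hcard : Fintype.card V = q + 1 + #L)
    (hq : #D * (#D + 1) * #L < 2 * q) {a b : V} (ha : a ∉ L) (hb : b ∉ L) (hab : a ≠ b) :
    G.Adj a b := by
  classical
  by_contra hnadj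
  obtain ⟨v, -, hmax⟩ := exists_max_image Lᶜ y ⟨a, mem_compl.2 ha⟩
  simp only [mem_compl] at hmax
  have hlow := hy.mul_sum_le hL fun w hw ↦ hmax w (disjoint_left.1 hDL hw)
  have hhigh := hy.two_mul_apply_le hL hcard ha hb ⟨hab, hnadj⟩ hmax
  have hq' : (#D * (#D + 1) * #L : ℝ) < 2 * q := by exact_mod_cast hq
  have hle : 2 * q * y v ≤ #D * (#D + 1) * #L * y v := by
    calc 2 * q * y v = q * (2 * y v) := by ring
      _ ≤ q * ((#D + 1) * ∑ w ∈ L, y w) := by gcongr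
      _ = (#D + 1) * (q * ∑ w ∈ L, y w) := by ring
      _ ≤ (#D + 1) * (#L * (#D * y v)) := by gcongr
      _ = #D * (#D + 1) * #L * y v := by ring
  have hv0 : y v = 0 := by
    by_contra hne
    exact hle.not_gt (mul_lt_mul_of_pos_right hq' ((hy.nonneg v).lt_of_ne' hne))
  have hq0 : (0 : ℝ) < q := by linarith [show (0 : ℝ) ≤ #D * (#D + 1) * #L by positivity]
  have hL0 : ∑ w ∈ L, y w ≤ 0 := by
    refine nonpos_of_mul_nonpos_right ?_ hq0
    simpa only [hv0, mul_zero] using hlow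
  have hC0 : ∑ w ∈ Lᶜ, y w ≤ 0 := sum_nonpos fun w hw ↦ hv0 ▸ hmax w (mem_compl.1 hw)
  have hpos := hy.sum_pos
  rw [← sum_add_sum_compl L] at hpos
  linarith

end IsSubinvariant
end Spectral

/-! ### The graphs `B(n, k, δ)` -/

section BGraph

variable {V W : Type*} {G H : SimpleGraph V} {D L : Finset V}

/-- `G` is the join of a clique `D` with the disjoint union of a clique and an independent set `L`.
This describes `B(n, k, δ)` without numbering the vertices. -/
structure IsBGraph (G : SimpleGraph V) (D L : Finset V) : Prop where
  disjoint : Disjoint D L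
  adj_iff : ∀ a b, G.Adj a b ↔ a ≠ b ∧ (a ∈ D ∨ b ∈ D ∨ (a ∉ L ∧ b ∉ L))

lemma isBGraph_Bgraph {n k δ : ℕ} (hn : 2 * δ + k ≤ n) :
    IsBGraph (Bgraph n k δ) {i | i < δ} ({i | i < n - (δ + k)} : Finset (Fin n))ᶜ where
  disjoint := by
    simp only [disjoint_left, mem_compl, mem_filter_univ, not_not]
    omega
  adj_iff a b := by
    simp only [mem_compl, mem_filter_univ, not_not]
    rfl

lemma card_filter_val_lt {m n : ℕ} (h : m ≤ n) : #{i : Fin n | i < m} = m := by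
  rw [← Fintype.card_subtype, Fintype.card_fin_lt_of_le h]

lemma card_filter_decide_mem [Fintype V] [DecidableEq V] (hDL : Disjoint D L) (p q : Bool) :
    #{v | (decide (v ∈ D), decide (v ∈ L)) = (p, q)} =
      if p then (if q then 0 else #D) else if q then #L else Fintype.card V - (#D + #L) := by
  have hdj := disjoint_left.1 hDL
  cases p <;> cases q <;> simp only [Prod.mk.injEq, decide_eq_true_eq, decide_eq_false_iff_not]
  · rw [if_neg (by simp), if_neg (by simp), ← card_union_of_disjoint hDL, ← card_compl]
    congr 1 with v
    simp
  · congr 1 with v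
    simpa using fun hL hD ↦ hdj hD hL
  · congr 1 with v
    simpa using fun hD ↦ hdj hD
  · simpa [filter_eq_empty_iff] using hdj

namespace IsBGraph

lemma nonempty_iso [Fintype V] [Fintype W] {G' : SimpleGraph W} {D' L' : Finset W}
    (h : IsBGraph G D L) (h' : IsBGraph G' D' L') (hV : Fintype.card V = Fintype.card W)
    (hD : #D = #D') (hL : #L = #L') : Nonempty (G ≃g G') := by
  classical
  have hfib (c : Bool × Bool) : Nonempty ({v // (decide (v ∈ D), decide (v ∈ L)) = c} ≃
      {w // (decide (w ∈ D'), decide (w ∈ L')) = c}) := by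
    obtain ⟨p, q⟩ := c
    rw [← Fintype.card_eq, Fintype.card_subtype, Fintype.card_subtype,
      card_filter_decide_mem h.disjoint, card_filter_decide_mem h'.disjoint, hV, hD, hL]
  let e : V ≃ W := Equiv.ofFiberEquiv fun c ↦ (hfib c).some
  have he (v : V) : (e v ∈ D' ↔ v ∈ D) ∧ (e v ∈ L' ↔ v ∈ L) := by
    simpa only [Prod.mk.injEq, decide_eq_decide] using
      Equiv.ofFiberEquiv_map (fun c ↦ (hfib c).some) v
  refine ⟨e, fun {a b} ↦ ?_⟩
  simp only [h.adj_iff, h'.adj_iff, (he _).1, (he _).2, e.injective.ne_iff]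

lemma nonempty_iso_Bgraph [Fintype V] {k δ : ℕ} (h : IsBGraph G D L) (hD : #D = δ)
    (hL : #L = δ + k) (hV : 2 * δ + k ≤ Fintype.card V) :
    Nonempty (G ≃g Bgraph (Fintype.card V) k δ) := by
  refine h.nonempty_iso (isBGraph_Bgraph hV) (Fintype.card_fin _).symm ?_ ?_
  · rw [hD, card_filter_val_lt (by omega)]
  · rw [hL, card_compl, card_filter_val_lt (by omega), Fintype.card_fin]
    omega

lemma mem_of_adj (h : IsBGraph G D L) {v w : V} (hv : v ∈ L) (hvw : G.Adj v w) : w ∈ D := by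
  rw [h.adj_iff] at hvw
  exact (hvw.2.resolve_left (disjoint_right.1 h.disjoint hv)).resolve_right fun hL ↦ hL.1 hv

lemma eq_of_le [Fintype V] [DecidableRel G.Adj] {q : ℕ} {y : V → ℝ} (h : IsBGraph H D L)
    (hGH : G ≤ H) (hy : IsSubinvariant G q y) (hdeg : ∀ v ∈ L, #D ≤ G.degree v)
    (hcard : Fintype.card V = q + 1 + #L) (hq : #D * (#D + 1) * #L < 2 * q) : G = H := by
  classical
  have hsub {v : V} (hv : v ∈ L) : G.neighborFinset v ⊆ D := fun w hw ↦
    h.mem_of_adj hv (hGH ((G.mem_neighborFinset v w).1 hw))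
  have hN {v d : V} (hv : v ∈ L) (hd : d ∈ D) : G.Adj v d := by
    have hNv : G.neighborFinset v = D := eq_of_subset_of_card_le (hsub hv) <| by
      simpa using hdeg v hv
    rwa [← SimpleGraph.mem_neighborFinset, hNv]
  have hC {a b : V} (ha : a ∉ L) (hb : b ∉ L) (hab : a ≠ b) : G.Adj a b :=
    hy.adj_of_notMem h.disjoint (fun v ↦ hsub) hcard hq ha hb hab
  have hD {d b : V} (hd : d ∈ D) (hdb : d ≠ b) : G.Adj d b := by
    by_cases hb : b ∈ L
    · exact (hN hb hd).symm
    · exact hC (disjoint_left.1 h.disjoint hd) hb hdb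
  refine le_antisymm hGH fun a b hab ↦ ?_
  obtain ⟨hne, ha | hb | ⟨ha, hb⟩⟩ := (h.adj_iff a b).1 hab
  exacts [hD ha hne, (hD hb hne.symm).symm, hC ha hb hne]

end IsBGraph
end BGraph

/-! ### Dense closed graphs -/

section DenseClosure

variable {V : Type*} [Fintype V] {G : SimpleGraph V} [DecidableRel G.Adj] {q δ t k : ℕ} {u v w : V}

/-- A graph on `q + 1 + t` vertices, closed under the Bondy–Chvátal closure, with minimum degree at
least `δ`, and with as many edges as a spectral radius of at least `q` forces. The last three
conditions say that `q` is large compared with `δ` and `t`. The application has `t = δ + k`. -/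
structure IsDenseClosure (G : SimpleGraph V) [DecidableRel G.Adj] (q δ t : ℕ) : Prop where
  card_eq : Fintype.card V = q + 1 + t
  le_degree : ∀ v, δ ≤ G.degree v
  degree_add_degree_le : ∀ ⦃u v⦄, Gᶜ.Adj u v → G.degree u + G.degree v ≤ q + δ
  le_sum_degree : (q + 1) * q + δ * t ≤ ∑ v, G.degree v
  delta_le : δ ≤ t
  two_mul_mul_lt : 2 * (δ * t) + 4 ≤ q
  four_mul_add_lt : 4 * t + δ + 5 ≤ q

/-- The vertices of degree `δ`, which turn out to form the independent part of `B(n, k, δ)`. -/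
def lowVertices (G : SimpleGraph V) [DecidableRel G.Adj] (δ : ℕ) : Finset V :=
  {v | G.degree v = δ}

lemma mem_lowVertices : v ∈ lowVertices G δ ↔ G.degree v = δ := by
  simp [lowVertices]

lemma exists_max_degree_add_degree (hG : G ≠ ⊤) :
    ∃ u v, Gᶜ.Adj u v ∧ G.degree u ≤ G.degree v ∧
      ∀ ⦃a b⦄, Gᶜ.Adj a b → G.degree a + G.degree b ≤ G.degree u + G.degree v := by
  classical
  obtain ⟨a, b, hab, hnadj⟩ := SimpleGraph.ne_top_iff_exists_not_adj.1 hG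
  obtain ⟨⟨u, v⟩, huv, hmax⟩ := exists_max_image {p : V × V | Gᶜ.Adj p.1 p.2}
    (fun p ↦ G.degree p.1 + G.degree p.2) ⟨(a, b), by simp [hab, hnadj]⟩
  simp only [mem_filter_univ, Prod.forall] at huv hmax
  rcases le_total (G.degree u) (G.degree v) with hle | hle
  · exact ⟨u, v, huv, hle, hmax⟩
  · exact ⟨v, u, huv.symm, hle, fun a b hab ↦ (hmax a b hab).trans_eq (add_comm _ _)⟩

lemma sum_add_ite_sub_ite [DecidableEq V] (s t : Finset V) (x y z : ℤ) :
    ∑ w, (x + (if w ∈ s then y else 0) - if w ∈ t then z else 0) =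
      Fintype.card V * x + #s * y - #t * z := by
  simp [sum_add_distrib]

/-- Vertices outside `N(u)` have degree at most `deg v`, and non-neighbours of `v` have degree at
most `deg u`. -/
lemma sum_degree_le_of_max (huv : G.degree u ≤ G.degree v)
    (hmax : ∀ ⦃a b⦄, Gᶜ.Adj a b → G.degree a + G.degree b ≤ G.degree u + G.degree v) :
    (∑ w, G.degree w : ℤ) ≤ G.degree v * (G.degree v + 1) +
      2 * G.degree u * (Fintype.card V - 1 - G.degree v) := by
  classical
  have hlt (w : V) : (G.degree w : ℤ) ≤ Fintype.card V - 1 := by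
    have := G.degree_lt_card_verts w
    omega
  have hpt (w : V) : (G.degree w : ℤ) ≤ G.degree v +
      (if w ∈ G.neighborFinset u then (Fintype.card V - 1 - G.degree v : ℤ) else 0) -
        if w ∈ Gᶜ.neighborFinset v then (G.degree v - G.degree u : ℤ) else 0 := by
    have hu : w ≠ u → ¬G.Adj u w → G.degree w ≤ G.degree v := fun hne hadj ↦ by
      have := hmax (a := u) (b := w) ⟨hne.symm, hadj⟩
      omega
    have hv : Gᶜ.Adj v w → G.degree w ≤ G.degree u := fun hadj ↦ by
      have := hmax hadj
      omega
    have := hlt v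
    have := hlt w
    simp only [SimpleGraph.mem_neighborFinset]
    rcases eq_or_ne w u with rfl | hne <;> split_ifs <;> grind
  refine (sum_le_sum fun w _ ↦ hpt w).trans_eq ?_
  have hcompl : (Gᶜ.degree v : ℤ) = Fintype.card V - 1 - G.degree v := by
    have := hlt v
    rw [SimpleGraph.degree_compl]
    omega
  rw [sum_add_ite_sub_ite, G.card_neighborFinset_eq_degree, Gᶜ.card_neighborFinset_eq_degree,
    hcompl]
  ring

lemma eq_zero_of_mul_le {q δ t s : ℤ} (hs : 0 ≤ s) (hsq : δ + 2 * s ≤ q) (hδ : 0 ≤ δ) (hδt : δ ≤ t)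
    (h₁ : 2 * (δ * t) + 4 ≤ q) (h₂ : 4 * t + δ + 5 ≤ q)
    (h : s * (2 * q + 1 - 2 * δ - 2 * t - 3 * s) ≤ δ * t) : s = 0 := by
  by_contra hne
  have hs1 : 1 ≤ s := by omega
  rcases le_total (4 * s) q with hsmall | hlarge
  · have hδ6 : 6 * δ ≤ q + 1 := by nlinarith [sq_nonneg (2 * δ - 3)]
    have hX : δ * t < 2 * q + 1 - 2 * δ - 2 * t - 3 * s := by linarith
    exact (h.trans_lt hX).not_ge <|
      le_mul_of_one_le_left ((mul_nonneg hδ (hδ.trans hδt)).trans hX.le) hs1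
  · have hX : 2 ≤ 2 * q + 1 - 2 * δ - 2 * t - 3 * s := by linarith
    linarith [mul_le_mul_of_nonneg_left hX hs]

namespace IsDenseClosure

lemma degree_eq_of_max (h : IsDenseClosure G q δ t) (hnadj : Gᶜ.Adj u v)
    (huv : G.degree u ≤ G.degree v)
    (hmax : ∀ ⦃a b⦄, Gᶜ.Adj a b → G.degree a + G.degree b ≤ G.degree u + G.degree v) :
    G.degree u = δ := by
  obtain ⟨s, hs⟩ := Nat.exists_eq_add_of_le (h.le_degree u)
  have hsum := h.degree_add_degree_le hnadj
  have hbound : s * (2 * q + 1 - 2 * δ - 2 * t - 3 * s : ℤ) ≤ δ * t := by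
    have hupper := sum_degree_le_of_max huv hmax
    have hlower : ((q + 1) * q + δ * t : ℤ) ≤ ∑ w, (G.degree w : ℤ) := by
      exact_mod_cast h.le_sum_degree
    have hmono : (0 : ℤ) ≤ (q - s - G.degree v) * (q - s + G.degree v + 1 - 2 * G.degree u) :=
      mul_nonneg (by omega) (by omega)
    rw [h.card_eq, hs] at hupper
    rw [hs] at hmono
    push_cast at hupper hmono
    linarith
  have hs0 := eq_zero_of_mul_le (by positivity) (by omega) (by positivity)
    (by exact_mod_cast h.delta_le) (by exact_mod_cast h.two_mul_mul_lt)
    (by exact_mod_cast h.four_mul_add_lt) hbound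
  omega

lemma mul_add_lt (h : IsDenseClosure G q δ t) : δ * t + δ < q := by
  linarith [h.delta_le, h.two_mul_mul_lt, h.four_mul_add_lt]

lemma lowVertices_nonempty (h : IsDenseClosure G q δ t) (hG : G ≠ ⊤) :
    (lowVertices G δ).Nonempty := by
  obtain ⟨u, v, hnadj, huv, hmax⟩ := exists_max_degree_add_degree hG
  exact ⟨u, mem_lowVertices.2 (h.degree_eq_of_max hnadj huv hmax)⟩

lemma le_card_lowVertices (h : IsDenseClosure G q δ t) (hG : G ≠ ⊤) : t ≤ #(lowVertices G δ) := by
  classical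
  obtain ⟨u, v, hnadj, huv, hmax⟩ := exists_max_degree_add_degree hG
  have hu := h.degree_eq_of_max hnadj huv hmax
  calc t ≤ Gᶜ.degree v := by
        have := h.degree_add_degree_le hnadj
        rw [SimpleGraph.degree_compl, h.card_eq]
        omega
    _ ≤ #(lowVertices G δ) := by
        rw [← Gᶜ.card_neighborFinset_eq_degree]
        refine card_le_card fun w hw ↦ mem_lowVertices.2 ?_
        have := hmax ((Gᶜ.mem_neighborFinset v w).1 hw)
        have := h.le_degree w
        omega

/-- Non-neighbours of a vertex of degree `δ` have degree at most `q`. -/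
lemma sum_sub_degree_le (h : IsDenseClosure G q δ t) (hG : G ≠ ⊤) {S : Finset V}
    (hS : Disjoint S (lowVertices G δ)) :
    ∑ w ∈ S, (q - G.degree w : ℤ) ≤ t * q - #(lowVertices G δ) * (q - δ) := by
  classical
  obtain ⟨u, hu⟩ := h.lowVertices_nonempty hG
  rw [mem_lowVertices] at hu
  set bound : V → ℤ := fun w ↦ q + (if w ∈ G.neighborFinset u then (t : ℤ) else 0) -
    if w ∈ lowVertices G δ then (q - δ : ℤ) else 0 with hbound
  have hdeg (w : V) : (G.degree w : ℤ) ≤ bound w := by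
    have hnadj : w ≠ u → ¬G.Adj u w → G.degree w ≤ q := fun hne hadj ↦ by
      have := h.degree_add_degree_le (u := u) (v := w) ⟨hne.symm, hadj⟩
      omega
    have hlt := G.degree_lt_card_verts w
    have := h.card_eq
    have := h.four_mul_add_lt
    simp only [hbound, SimpleGraph.mem_neighborFinset, mem_lowVertices]
    rcases eq_or_ne w u with rfl | hne <;> split_ifs <;> grind
  have hsum : ∑ w, bound w = (q + 1 + t) * q + δ * t - #(lowVertices G δ) * (q - δ) := by
    rw [sum_add_ite_sub_ite, G.card_neighborFinset_eq_degree, hu, h.card_eq]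
    push_cast
    ring
  have hlower : ((q + 1) * q + δ * t : ℤ) ≤ ∑ w, (G.degree w : ℤ) := by
    exact_mod_cast h.le_sum_degree
  calc ∑ w ∈ S, (q - G.degree w : ℤ) ≤ ∑ w ∈ S, (bound w - G.degree w) := by
        refine sum_le_sum fun w hw ↦ sub_le_sub_right ?_ _
        simp only [hbound, disjoint_left.1 hS hw, if_false, sub_zero]
        split_ifs <;> simp
    _ ≤ ∑ w, (bound w - G.degree w) := sum_le_univ_sum_of_nonneg fun w ↦ sub_nonneg.2 (hdeg w)
    _ ≤ t * q - #(lowVertices G δ) * (q - δ) := by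
        rw [sum_sub_distrib, hsum]
        linarith

lemma card_lowVertices (h : IsDenseClosure G q δ t) (hG : G ≠ ⊤) : #(lowVertices G δ) = t := by
  refine (h.le_card_lowVertices hG).antisymm' ?_
  by_contra! hlt
  have hsum := h.sum_sub_degree_le hG (disjoint_empty_left _)
  rw [sum_empty] at hsum
  have hq : (δ * t + δ : ℤ) < q := by exact_mod_cast h.mul_add_lt
  have hδ : (0 : ℤ) ≤ q - δ := by linarith [show (0 : ℤ) ≤ δ * t by positivity]
  have hmul : (t + 1 : ℤ) * (q - δ) ≤ #(lowVertices G δ) * (q - δ) :=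
    mul_le_mul_of_nonneg_right (by exact_mod_cast hlt) hδ
  linarith

lemma adj_of_degree_ne (h : IsDenseClosure G q δ t) (hG : G ≠ ⊤) {a b : V} (ha : G.degree a ≠ δ)
    (hb : G.degree b ≠ δ) (hab : a ≠ b) : G.Adj a b := by
  classical
  by_contra hnadj
  have hS : Disjoint {a, b} (lowVertices G δ) := by simp [mem_lowVertices, ha, hb]
  have hsum := h.sum_sub_degree_le hG hS
  rw [sum_pair hab, h.card_lowVertices hG] at hsum
  have hdeg : (G.degree a + G.degree b : ℤ) ≤ q + δ := by
    exact_mod_cast h.degree_add_degree_le ⟨hab, hnadj⟩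
  have hq : (δ * t + δ : ℤ) < q := by exact_mod_cast h.mul_add_lt
  linarith

lemma isUniversal_of_adj (h : IsDenseClosure G q δ t) (hG : G ≠ ⊤) {c : V} (hw : G.degree w = δ)
    (hc : G.degree c ≠ δ) (hcw : G.Adj c w) : G.IsUniversal c := by
  classical
  have hdeg : q + 1 ≤ G.degree c := by
    have hcard : #(insert w ((lowVertices G δ)ᶜ.erase c)) = q + 1 := by
      rw [card_insert_of_notMem (by simp [mem_lowVertices, hw]),
        card_erase_of_mem (by simpa [mem_lowVertices]), card_compl, h.card_lowVertices hG,
        h.card_eq]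
      omega
    rw [← hcard, ← G.card_neighborFinset_eq_degree]
    refine card_le_card (insert_subset (by simpa using hcw) fun b hb ↦ ?_)
    simp only [mem_erase, mem_compl, mem_lowVertices] at hb
    simpa using h.adj_of_degree_ne hG hc hb.2 hb.1.symm
  intro b hcb
  by_contra hnadj
  have := h.degree_add_degree_le (u := c) (v := b) ⟨hcb, hnadj⟩
  have := h.le_degree b
  omega

lemma degree_ne_of_isUniversal (h : IsDenseClosure G q δ t) {c : V} (hc : G.IsUniversal c) :
    G.degree c ≠ δ := by
  have := h.card_eq
  have := h.four_mul_add_lt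
  have := (G.degree_eq_card_sub_one c).2 hc
  omega

variable {D : Finset V}

lemma disjoint_lowVertices (h : IsDenseClosure G q δ t) (hD : ∀ v, v ∈ D ↔ G.IsUniversal v) :
    Disjoint D (lowVertices G δ) :=
  disjoint_left.2 fun v hv hvL ↦
    h.degree_ne_of_isUniversal ((hD v).1 hv) (mem_lowVertices.1 hvL)

lemma neighborFinset_eq_union [DecidableEq V] (h : IsDenseClosure G q δ t) (hG : G ≠ ⊤)
    (hD : ∀ v, v ∈ D ↔ G.IsUniversal v) (hw : w ∈ lowVertices G δ) :
    G.neighborFinset w = D ∪ (G.neighborFinset w ∩ lowVertices G δ) := by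
  ext c
  rw [mem_union, mem_inter, G.mem_neighborFinset]
  refine ⟨fun hwc ↦ ?_, ?_⟩
  · by_cases hc : c ∈ lowVertices G δ
    · exact .inr ⟨hwc, hc⟩
    · rw [mem_lowVertices] at hw hc
      exact .inl ((hD c).2 (h.isUniversal_of_adj hG hw hc hwc.symm))
  · rintro (hc | hc)
    · exact ((hD c).1 hc (disjoint_left.1 (h.disjoint_lowVertices hD) hc <| · ▸ hw)).symm
    · exact hc.1

lemma card_add_card_inter_lowVertices [DecidableEq V] (h : IsDenseClosure G q δ t) (hG : G ≠ ⊤)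
    (hD : ∀ v, v ∈ D ↔ G.IsUniversal v) (hw : w ∈ lowVertices G δ) :
    #D + #(G.neighborFinset w ∩ lowVertices G δ) = δ := by
  rw [← card_union_of_disjoint ((h.disjoint_lowVertices hD).mono_right inter_subset_right),
    ← h.neighborFinset_eq_union hG hD hw, G.card_neighborFinset_eq_degree, mem_lowVertices.1 hw]

lemma exists_isUniversal (h : IsDenseClosure G q δ t) (hG : G ≠ ⊤) (hconn : G.Connected) :
    ∃ c, G.IsUniversal c := by
  obtain ⟨w, hw⟩ := h.lowVertices_nonempty hG
  obtain ⟨c, hc⟩ : ∃ c, c ∉ lowVertices G δ := by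
    by_contra! hall
    have := h.card_lowVertices hG
    rw [eq_univ_iff_forall.2 hall, card_univ, h.card_eq] at this
    omega
  obtain ⟨p⟩ := hconn.preconnected w c
  obtain ⟨d, -, hd₁, hd₂⟩ := p.exists_boundary_dart (lowVertices G δ) hw hc
  rw [mem_coe, mem_lowVertices] at hd₁ hd₂
  exact ⟨d.snd, h.isUniversal_of_adj hG hd₁ hd₂ d.adj.symm⟩

lemma isBGraph (h : IsDenseClosure G q δ t) (hG : G ≠ ⊤) (hD : ∀ v, v ∈ D ↔ G.IsUniversal v)
    (hcard : #D = δ) : IsBGraph G D (lowVertices G δ) where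
  disjoint := h.disjoint_lowVertices hD
  adj_iff a b := by
    classical
    have hlow {w c : V} (hw : w ∈ lowVertices G δ) (hwc : G.Adj w c) : c ∈ D := by
      have hempty := h.card_add_card_inter_lowVertices hG hD hw
      rw [hcard, Nat.add_eq_left, card_eq_zero] at hempty
      rwa [← union_empty D, ← hempty, ← h.neighborFinset_eq_union hG hD hw, G.mem_neighborFinset]
    refine ⟨fun hab ↦ ⟨hab.ne, ?_⟩, ?_⟩
    · by_contra! hnot
      exact hnot.1 (hlow (hnot.2.2 fun ha ↦ hnot.2.1 (hlow ha hab)) hab.symm)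
    · rintro ⟨hab, ha | hb | ⟨ha, hb⟩⟩
      · exact (hD a).1 ha hab
      · exact ((hD b).1 hb hab.symm).symm
      · rw [mem_lowVertices] at ha hb
        exact h.adj_of_degree_ne hG ha hb hab

/-- If fewer than `δ` vertices are universal, every vertex of degree `δ` has a neighbour of the same
degree, and the universal vertices link up a cover of the rest. -/
lemma exists_isBGraph (h : IsDenseClosure G q δ (δ + k)) (hk : 1 ≤ k)
    (hconn : k = 1 → G.Connected) (hcov : ¬PathCoverableOn G univ k) :
    ∃ D L, IsBGraph G D L ∧ #D = δ ∧ #L = δ + k := by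
  classical
  have hG : G ≠ ⊤ := by
    rintro rfl
    exact hcov <| (PathCoverableOn.of_isClique (by simp [SimpleGraph.isClique_iff])).mono hk
  set D : Finset V := {v | G.IsUniversal v}
  have hD (v : V) : v ∈ D ↔ G.IsUniversal v := mem_filter_univ v
  have hsplit {w : V} (hw : w ∈ lowVertices G δ) := h.card_add_card_inter_lowVertices hG hD hw
  have hL := h.card_lowVertices hG
  have hDδ : #D ≤ δ := by
    obtain ⟨w, hw⟩ := h.lowVertices_nonempty hG
    exact Nat.le.intro (hsplit hw)
  have hD₂ : 2 ≤ k + #D := by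
    rcases hk.eq_or_lt with rfl | hk
    · obtain ⟨c, hc⟩ := h.exists_isUniversal hG (hconn rfl)
      have := card_pos.2 ⟨c, (hD c).2 hc⟩
      omega
    · omega
  have hcard : #D = δ := by
    by_contra hne
    refine hcov <| .of_dominating (L := lowVertices G δ) (r := δ - #D) hk hD₂
      (fun d hd v hdv ↦ (hD d).1 hd hdv) (h.disjoint_lowVertices hD) (fun a ha b hb hab ↦ ?_)
      (by omega) (by omega) fun w hw ↦ (by have := hsplit hw; omega)
    simp only [coe_compl, Set.mem_compl_iff, mem_coe, mem_lowVertices] at ha hb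
    exact h.adj_of_degree_ne hG ha hb hab
  exact ⟨D, lowVertices G δ, h.isBGraph hG hD hcard, hcard, hL⟩

end IsDenseClosure
end DenseClosure

section Main

variable {V : Type*} [Fintype V]

lemma IsSubinvariant.isDenseClosure {G : SimpleGraph V} [DecidableRel G.Adj] {q δ k : ℕ} {y : V → ℝ}
    (hy : IsSubinvariant G q y) (hq : Fintype.card V = q + 1 + (δ + k))
    (hn : max (δ ^ 2 * (δ + k) + δ + k + 5) (5 * k + 6 * δ + 6) ≤ Fintype.card V)
    (hδ : ∀ v, δ ≤ G.degree v)
    (hadj : ∀ ⦃u v⦄, Gᶜ.Adj u v → G.degree u + G.degree v + k < Fintype.card V) :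
    IsDenseClosure G q δ (δ + k) := by
  rw [hq, max_le_iff] at hn
  refine ⟨hq, hδ, fun u v huv ↦ ?_, ?_, by omega, ?_, by omega⟩
  · have := hadj huv
    omega
  · have hsum := hy.mul_sub_le_sum_degree q.cast_nonneg (δ := δ) fun v ↦ by exact_mod_cast hδ v
    rw [hq] at hsum
    have : ((q + 1) * q + δ * (δ + k) : ℝ) ≤ ∑ v, (G.degree v : ℝ) := by
      push_cast at hsum
      linarith
    exact_mod_cast this
  · obtain rfl | rfl | hδ₂ : δ = 0 ∨ δ = 1 ∨ 2 ≤ δ := by omega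
    · omega
    · omega
    · linarith [Nat.mul_le_mul_right (δ * (δ + k)) hδ₂]

theorem specRad_kPathCoverable_general [DecidableEq V] (k δ n : ℕ) (hk : 1 ≤ k)
    (hn : max (δ ^ 2 * (δ + k) + δ + k + 5) (5 * k + 6 * δ + 6) ≤ n)
    (G : SimpleGraph V) [DecidableRel G.Adj] (hV : Fintype.card V = n)
    (hconn : k = 1 → G.Connected) (hmin : ∀ v, δ ≤ G.degree v)
    (hl : (n : ℝ) - δ - k - 1 ≤ adjSpecRad G) :
    PathCoverable G k ∨ Nonempty (G ≃g Bgraph n k δ) := by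
  subst hV
  refine or_iff_not_imp_left.2 fun hcov ↦ ?_
  obtain ⟨q, hq⟩ : ∃ q, Fintype.card V = q + 1 + (δ + k) :=
    ⟨Fintype.card V - (δ + k) - 1, by omega⟩
  obtain ⟨y, hy⟩ : ∃ y, IsSubinvariant G q y := by
    refine exists_isSubinvariant_of_le_adjSpecRad (by exact_mod_cast (by omega : 0 < q)) ?_
    rw [hq] at hl
    push_cast at hl
    linarith
  obtain ⟨H, _, hGH, hH, hadj⟩ := exists_saturated (mt PathCoverableOn.pathCoverable hcov)
  have hdense : IsDenseClosure H q δ (δ + k) := (hy.mono hGH).isDenseClosure hq hn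
    (fun v ↦ (hmin v).trans (SimpleGraph.degree_le_of_le hGH)) hadj
  obtain ⟨D, L, hDL, hD, hL⟩ := hdense.exists_isBGraph hk (fun h ↦ (hconn h).mono hGH) hH
  have hlarge : #D * (#D + 1) * #L < 2 * q := by
    rw [hD, hL]
    linarith [le_of_max_le_left hn, Nat.mul_le_mul_right (δ + k) (Nat.le_self_pow two_ne_zero δ)]
  obtain rfl : G = H := hDL.eq_of_le hGH hy (fun v _ ↦ hD.trans_le (hmin v)) (hL ▸ hq) hlarge
  exact hDL.nonempty_iso_Bgraph hD hL (by omega)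

end Main

/-- **Theorem 1.3** (Liu et al.): spectral radius condition for a connected graph with given
minimum degree to be k-path-coverable. -/
theorem specRad_kPathCoverable (k δ n : ℕ) (hk : 1 ≤ k) (hδ : 2 ≤ δ)
    (hn : max (δ ^ 2 * (δ + k) + δ + k + 5) (5 * k + 6 * δ + 6) ≤ n)
    (G : SimpleGraph (Fin n)) [DecidableRel G.Adj]
    (hconn : G.Connected) (hmin : ∀ v, δ ≤ G.degree v)
    (hl : (n : ℝ) - δ - k - 1 ≤ adjSpecRad G) :
    PathCoverable G k ∨ Nonempty (G ≃g Bgraph n k δ) :=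
  specRad_kPathCoverable_general k δ n hk hn G (Fintype.card_fin n) (fun _ ↦ hconn) hmin hl
end

section
/- The property of being k-path-coverable is (n−k)-stable: if G is a simple graph on n vertices, u and v are non-adjacent vertices of G with d_G(u) + d_G(v) ≥ n − k, and the graph G + uv obtained by adding the edge uv is k-path-coverable, then G itself is k-path-coverable. -/
open Finset Matrix

/-!
Arrange the vertices in a single list and count its gaps, the consecutive pairs that are not
adjacent: cutting at the gaps shows that `G` is `k`-path-coverable iff some arrangement has fewer
than `k` gaps. Closing the list up into a cycle costs at most one more gap, and opening a cycle at
a gap gains one, so an arrangement with at most `k` cyclic gaps is just as good.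

If the edge `uv` is used by an arrangement for `G + uv`, rotating that arrangement puts `v` first
and `u` last and leaves at most `k` gaps in `G`; fewer would already do, so take exactly `k`. For
consecutive vertices `w, x`, reversing the segment `v ... w` and closing up replaces the pairs
`wx`, `uv` of the cycle by `vx`, `uw`. If this never brought the number of cyclic gaps down to `k`,
then at most one of `u ~ w`, `v ~ x`, `w ≁ x` would hold for each of the `n - 1` pairs `w, x`, and
summing over them would give `d(u) + d(v) + k ≤ n - 1`. This is the Bondy–Chvátal exchange for
Hamilton cycles, applied to the join of `G` with `K_k`.
-/

section GapCount

variable {α : Type*} {R S : α → α → Prop} {l m : List α} {a b : α}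

open Classical in
/-- The indicator of `¬ R a b`: the contribution of the consecutive pair `a, b` to `gapCount`. -/
noncomputable def gap (R : α → α → Prop) (a b : α) : ℕ := if R a b then 0 else 1

/-- The number of gaps of a list with respect to `R`, i.e. of positions where it fails to be an
`R`-chain. For the adjacency relation of a graph, a list with `g` gaps splits into `g + 1` walks. -/
noncomputable def gapCount (R : α → α → Prop) : List α → ℕ
  | [] => 0
  | [_] => 0
  | a :: b :: l => gap R a b + gapCount R (b :: l)

theorem gap_of_rel (h : R a b) : gap R a b = 0 := if_pos h

theorem gap_of_not_rel (h : ¬R a b) : gap R a b = 1 := if_neg h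

theorem gap_le_one (R : α → α → Prop) (a b : α) : gap R a b ≤ 1 := by
  unfold gap
  split <;> simp

theorem gap_add_toNat_decide (R : α → α → Prop) (a b : α) [Decidable (R a b)] :
    gap R a b + (decide (R a b)).toNat = 1 := by
  by_cases h : R a b <;> simp [gap, h]

theorem gap_comm [Std.Symm R] (a b : α) : gap R a b = gap R b a := by
  have h : R a b ↔ R b a := ⟨symm_of R, symm_of R⟩
  by_cases hab : R a b
  · rw [gap_of_rel hab, gap_of_rel (h.1 hab)]
  · rw [gap_of_not_rel hab, gap_of_not_rel (h.not.1 hab)]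

theorem gapCount_append (ha : l.getLast? = some a) (hb : m.head? = some b) :
    gapCount R (l ++ m) = gapCount R l + gap R a b + gapCount R m := by
  obtain ⟨m, rfl⟩ := List.head?_eq_some_iff.1 hb
  induction l using List.twoStepInduction with
  | nil => simp at ha
  | singleton c => simp_all [gapCount]
  | cons_cons c d l _ ih =>
    have := ih d (by simpa using ha)
    simp only [List.cons_append, gapCount] at this ⊢
    omega

theorem gapCount_append_le (l m : List α) :
    gapCount R (l ++ m) ≤ gapCount R l + gapCount R m + 1 := by
  cases ha : l.getLast? with
  | none => simp_all [gapCount]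
  | some a =>
    cases hb : m.head? with
    | none => simp_all [gapCount]
    | some b =>
      have := gap_le_one R a b
      rw [gapCount_append ha hb]
      omega

theorem gapCount_reverse [Std.Symm R] (l : List α) : gapCount R l.reverse = gapCount R l := by
  induction l using List.twoStepInduction with
  | nil | singleton => rfl
  | cons_cons a b l _ ih =>
    rw [List.reverse_cons, gapCount_append (a := b) (b := a) (by simp) rfl, ih b, gap_comm]
    simp only [gapCount]
    omega

theorem gapCount_le_gapCount_of_isChain (h : l.IsChain fun a b ↦ S a b → R a b) :
    gapCount R l ≤ gapCount S l := by
  induction l using List.twoStepInduction with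
  | nil | singleton => rfl
  | cons_cons a b l _ ih =>
    obtain ⟨hab, hl⟩ := List.isChain_cons_cons.1 h
    have hgap : gap R a b ≤ gap S a b := by
      unfold gap
      split_ifs <;> simp_all
    exact Nat.add_le_add hgap (ih b hl)

theorem gapCount_eq_zero_of_isChain (h : l.IsChain R) : gapCount R l = 0 := by
  induction l using List.twoStepInduction with
  | nil | singleton => rfl
  | cons_cons a b l _ ih =>
    obtain ⟨hab, hl⟩ := List.isChain_cons_cons.1 h
    rw [gapCount, gap_of_rel hab, ih b hl]

theorem exists_eq_append_of_not_isChain (h : ¬l.IsChain R) :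
    ∃ A B a b, l = A ++ B ∧ A.getLast? = some a ∧ B.head? = some b ∧ ¬R a b := by
  rw [List.isChain_iff_forall_rel_of_append_cons_cons] at h
  push Not at h
  obtain ⟨a, b, A, B, rfl, hab⟩ := h
  exact ⟨A ++ [a], b :: B, a, b, by simp, by simp, by simp, hab⟩

theorem gapCount_flatten_lt_length {L : List (List α)} (hL : L ≠ [])
    (hchain : ∀ l ∈ L, l.IsChain R) : gapCount R L.flatten < L.length := by
  induction L using List.twoStepInduction with
  | nil => contradiction
  | singleton l => simp [gapCount_eq_zero_of_isChain (hchain l (by simp))]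
  | cons_cons l m L _ ih =>
    have hrec := ih m (by simp) fun x hx ↦ hchain x (List.mem_cons_of_mem l hx)
    have happend := gapCount_append_le (R := R) l (m :: L).flatten
    rw [gapCount_eq_zero_of_isChain (hchain l (by simp))] at happend
    rw [List.flatten_cons, List.length_cons]
    omega

open Classical in
theorem length_splitBy_le_gapCount_add_one (R : α → α → Prop) (l : List α) :
    (l.splitBy (R · ·)).length ≤ gapCount R l + 1 := by
  induction hn : l.length using Nat.strong_induction_on generalizing l with | _ n ih
  subst hn
  by_cases h : l.IsChain R
  · rcases eq_or_ne l [] with rfl | hl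
    · simp
    · simp [List.splitBy_of_isChain hl (r := (R · ·)) (by simpa using h)]
  · obtain ⟨A, B, a, b, rfl, ha, hb, hab⟩ := exists_eq_append_of_not_isChain h
    have hA : A ≠ [] := fun h ↦ by simp [h] at ha
    have hB : B ≠ [] := fun h ↦ by simp [h] at hb
    rw [List.splitBy_append (by simp [ha, hb, hab]), List.length_append,
      gapCount_append ha hb, gap_of_not_rel hab]
    have hlenA := ih A.length (by simpa [List.length_pos_iff] using hB) A rfl
    have hlenB := ih B.length (by simpa [List.length_pos_iff] using hA) B rfl
    omega

theorem gapCount_add_countP_add_countP_le (p q : α → Bool)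
    (h : (a :: l).IsChain fun w x ↦ gap R w x + (p w).toNat + (q x).toNat ≤ 1) :
    gapCount R (a :: l) + (a :: l).dropLast.countP p + l.countP q ≤ l.length := by
  induction l generalizing a with
  | nil => simp [gapCount]
  | cons b l ih =>
    obtain ⟨hab, hl⟩ := List.isChain_cons_cons.1 h
    have := ih hl
    cases hp : p a <;> cases hq : q b <;> simp [gapCount, hp, hq] at hab ⊢ <;> omega

end GapCount

section VertexOrdering

variable {V : Type*} {G : SimpleGraph V} {l m : List V} {k : ℕ} {u v : V}

/-- An arrangement of all elements of `V`, each occurring once, in a list. The vertices of a path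
cover, read off path by path, form such a list. -/
structure IsVertexOrdering (l : List V) : Prop where
  nodup : l.Nodup
  mem (x : V) : x ∈ l

theorem IsVertexOrdering.perm (hl : IsVertexOrdering l) (h : m.Perm l) : IsVertexOrdering m :=
  ⟨h.nodup_iff.2 hl.nodup, fun x ↦ h.mem_iff.2 (hl.mem x)⟩

theorem IsVertexOrdering.countP_adj [Fintype V] [DecidableRel G.Adj] (hl : IsVertexOrdering l)
    (w : V) : l.countP (G.Adj w ·) = G.degree w := by
  classical
  rw [List.countP_eq_length_filter, ← List.toFinset_card_of_nodup (hl.nodup.filter _),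
    ← SimpleGraph.card_neighborFinset_eq_degree]
  congr 1
  ext x
  simp [hl.mem]

theorem IsVertexOrdering.length_eq_card [Fintype V] (hl : IsVertexOrdering l) :
    l.length = Fintype.card V := by
  classical
  rw [← List.toFinset_card_of_nodup hl.nodup, ← Finset.card_univ]
  congr 1
  ext x
  simp [hl.mem]

theorem IsVertexOrdering.pathCoverable_of_flatten {L : List (List V)}
    (hL : IsVertexOrdering L.flatten) (hne : ∀ l ∈ L, l ≠ [])
    (hchain : ∀ l ∈ L, l.IsChain G.Adj) : PathCoverable G L.length := by
  obtain ⟨hnodup, hdisj⟩ := List.nodup_flatten.1 hL.nodup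
  refine ⟨L.length, fun i ↦ ⟨_, _, SimpleGraph.Walk.ofSupport (L.get i) (hne _ (L.get_mem i))
    (hchain _ (L.get_mem i))⟩, le_rfl, fun i ↦ ?_, fun x ↦ ?_, fun i j hij x ↦ ?_⟩
  · rw [SimpleGraph.Walk.isPath_def, SimpleGraph.Walk.support_ofSupport]
    exact hnodup _ (L.get_mem i)
  · obtain ⟨l, hl, hx⟩ := List.mem_flatten.1 (hL.mem x)
    obtain ⟨i, rfl⟩ := List.get_of_mem hl
    exact ⟨i, by simpa only [SimpleGraph.Walk.support_ofSupport] using hx⟩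
  · simp only [SimpleGraph.Walk.support_ofSupport]
    rw [List.pairwise_iff_get] at hdisj
    intro hi hj
    exact hij.lt_or_gt.elim (hdisj i j · hi hj) (hdisj j i · hj hi)

theorem PathCoverable.mono {j : ℕ} (h : PathCoverable G j) (hjk : j ≤ k) : PathCoverable G k :=
  let ⟨m, P, hm, hP⟩ := h
  ⟨m, P, hm.trans hjk, hP⟩

theorem PathCoverable.exists_gapCount_lt [Nonempty V] (h : PathCoverable G k) :
    ∃ l, IsVertexOrdering l ∧ gapCount G.Adj l < k := by
  obtain ⟨m, P, hmk, hpath, hcover, hdisj⟩ := h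
  let L := List.ofFn fun i ↦ (P i).2.2.support
  have hm : 0 < m := (hcover (Classical.arbitrary V)).choose.pos
  have hgaps : gapCount G.Adj L.flatten < L.length := by
    refine gapCount_flatten_lt_length (by simp [L, hm.ne']) ?_
    simpa only [L, List.forall_mem_ofFn_iff] using fun i ↦ (P i).2.2.isChain_adj_support
  refine ⟨L.flatten, ⟨List.nodup_flatten.2 ⟨?_, ?_⟩, fun x ↦ ?_⟩, ?_⟩
  · simpa only [L, List.forall_mem_ofFn_iff] using fun i ↦ (hpath i).support_nodup
  · exact List.pairwise_ofFn.2 fun i j hij x ↦ hdisj i j hij.ne x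
  · simpa [L] using hcover x
  · rw [List.length_ofFn] at hgaps
    omega

theorem IsVertexOrdering.pathCoverable_of_gapCount_lt (hl : IsVertexOrdering l)
    (h : gapCount G.Adj l < k) : PathCoverable G k := by
  classical
  have hflatten := List.flatten_splitBy (G.Adj · ·) l
  have hcover : PathCoverable G (l.splitBy (G.Adj · ·)).length :=
    IsVertexOrdering.pathCoverable_of_flatten (hflatten.symm ▸ hl)
      (fun _ ↦ List.ne_nil_of_mem_splitBy)
      (fun _ hm ↦ by simpa using List.isChain_of_mem_splitBy hm)
  exact hcover.mono ((length_splitBy_le_gapCount_add_one G.Adj l).trans h)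

theorem IsVertexOrdering.pathCoverable_of_gapCount_add_gap_le (hl : IsVertexOrdering l)
    (hv : l.head? = some v) (hu : l.getLast? = some u) (hk : 0 < k)
    (h : gapCount G.Adj l + gap G.Adj u v ≤ k) : PathCoverable G k := by
  by_cases hchain : l.IsChain G.Adj
  · exact hl.pathCoverable_of_gapCount_lt (by rwa [gapCount_eq_zero_of_isChain hchain])
  obtain ⟨A, B, a, b, rfl, ha, hb, hab⟩ := exists_eq_append_of_not_isChain hchain
  have hA : A.head? = some v := by
    obtain ⟨A, rfl⟩ := List.getLast?_eq_some_iff.1 ha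
    simpa using hv
  have hB : B.getLast? = some u := by
    obtain ⟨B, rfl⟩ := List.head?_eq_some_iff.1 hb
    simpa using hu
  refine (hl.perm List.perm_append_comm).pathCoverable_of_gapCount_lt (l := B ++ A) ?_
  rw [gapCount_append ha hb, gap_of_not_rel hab] at h
  rw [gapCount_append hB hA]
  omega

theorem IsVertexOrdering.pathCoverable_of_exchange {A B : List V} {w x : V}
    (hl : IsVertexOrdering (A ++ B)) (hv : A.head? = some v) (hw : A.getLast? = some w)
    (hx : B.head? = some x) (hu : B.getLast? = some u) (hk : 0 < k)
    (h : gapCount G.Adj A + gap G.Adj v x + gapCount G.Adj B + gap G.Adj u w ≤ k) :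
    PathCoverable G k := by
  refine (hl.perm ((List.reverse_perm A).append_right B)).pathCoverable_of_gapCount_add_gap_le
    (v := w) (u := u) (by simp [hw]) (by simp [hu]) hk ?_
  have := G.symm
  rwa [gapCount_append (by rwa [List.getLast?_reverse]) hx, gapCount_reverse]

theorem IsVertexOrdering.isChain_of_not_pathCoverable [DecidableRel G.Adj]
    (hl : IsVertexOrdering l) (hv : l.head? = some v) (hu : l.getLast? = some u) (hk : 0 < k)
    (hgaps : gapCount G.Adj l ≤ k) (hnot : ¬PathCoverable G k) :
    l.IsChain fun w x ↦
      gap G.Adj w x + (decide (G.Adj u w)).toNat + (decide (G.Adj v x)).toNat ≤ 1 := by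
  rw [List.isChain_iff_forall_rel_of_append_cons_cons]
  intro w x A B hAB
  obtain rfl : l = (A ++ [w]) ++ (x :: B) := by simpa using hAB
  by_contra hgt
  have hA : (A ++ [w]).head? = some v := by simpa using hv
  have hB : (x :: B).getLast? = some u := by simpa using hu
  rw [gapCount_append (a := w) (b := x) (by simp) rfl] at hgaps
  refine hnot (hl.pathCoverable_of_exchange hA (w := w) (x := x) (by simp) rfl hB hk ?_)
  have huw := gap_add_toNat_decide G.Adj u w
  have hvx := gap_add_toNat_decide G.Adj v x
  omega

theorem IsVertexOrdering.pathCoverable_of_card_le_add_degree [Fintype V] [DecidableRel G.Adj]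
    (hl : IsVertexOrdering l) (hv : l.head? = some v) (hu : l.getLast? = some u) (hk : 0 < k)
    (hgaps : gapCount G.Adj l ≤ k) (hdeg : Fintype.card V ≤ k + (G.degree u + G.degree v)) :
    PathCoverable G k := by
  by_contra hnot
  have hk_le : k ≤ gapCount G.Adj l :=
    not_lt.1 fun hlt ↦ hnot (hl.pathCoverable_of_gapCount_lt hlt)
  have hchain := hl.isChain_of_not_pathCoverable hv hu hk hgaps hnot
  obtain ⟨m, rfl⟩ := List.head?_eq_some_iff.1 hv
  have hcount := gapCount_add_countP_add_countP_le _ _ hchain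
  have hcount_u : (v :: m).dropLast.countP (G.Adj u ·) = G.degree u := by
    obtain ⟨m', hm'⟩ := List.getLast?_eq_some_iff.1 hu
    simp [← hl.countP_adj u, hm']
  have hcount_v : m.countP (G.Adj v ·) = G.degree v := by
    simp [← hl.countP_adj v]
  have hlen := hl.length_eq_card
  rw [List.length_cons] at hlen
  omega

theorem gapCount_adj_le_gapCount_sup_edge (hu : u ∉ l) :
    gapCount G.Adj l ≤ gapCount (G ⊔ SimpleGraph.edge u v).Adj l := by
  refine gapCount_le_gapCount_of_isChain (List.Pairwise.isChain ?_)
  refine List.pairwise_of_forall_mem_list fun a ha b hb hab ↦ ?_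
  have hau : a ≠ u := fun h ↦ hu (h ▸ ha)
  have hbu : b ≠ u := fun h ↦ hu (h ▸ hb)
  simpa [SimpleGraph.edge_adj, hau, hbu] using hab

theorem IsVertexOrdering.pathCoverable_of_gapCount_sup_edge_lt [Fintype V] [DecidableRel G.Adj]
    {A B : List V} (hl : IsVertexOrdering (A ++ u :: v :: B))
    (hgaps : gapCount (G ⊔ SimpleGraph.edge u v).Adj (A ++ u :: v :: B) < k)
    (hdeg : Fintype.card V ≤ k + (G.degree u + G.degree v)) : PathCoverable G k := by
  have hsplit : A ++ u :: v :: B = (A ++ [u]) ++ (v :: B) := by simp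
  rw [hsplit] at hl hgaps
  rw [gapCount_append (a := u) (b := v) (by simp) rfl] at hgaps
  have hdisj := List.disjoint_of_nodup_append hl.nodup
  have hA : gapCount G.Adj (A ++ [u]) ≤ gapCount (G ⊔ SimpleGraph.edge u v).Adj (A ++ [u]) := by
    rw [SimpleGraph.edge_comm]
    exact gapCount_adj_le_gapCount_sup_edge fun hv ↦ hdisj hv (by simp)
  have hB : gapCount G.Adj (v :: B) ≤ gapCount (G ⊔ SimpleGraph.edge u v).Adj (v :: B) :=
    gapCount_adj_le_gapCount_sup_edge fun hu ↦ hdisj (by simp) hu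
  refine (hl.perm List.perm_append_comm).pathCoverable_of_card_le_add_degree
    (l := v :: B ++ (A ++ [u])) (v := v) (u := u) rfl (by simp [List.getLast?_cons])
    (Nat.zero_lt_of_lt hgaps) ?_ hdeg
  have := gapCount_append_le (R := G.Adj) (v :: B) (A ++ [u])
  omega

end VertexOrdering

theorem pathCoverable_stable_general {V : Type*} [Fintype V] {k : ℕ} (G : SimpleGraph V)
    [DecidableRel G.Adj] (u v : V) (hdeg : Fintype.card V - k ≤ G.degree u + G.degree v)
    (hcov : PathCoverable (G ⊔ SimpleGraph.edge u v) k) : PathCoverable G k := by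
  have : Nonempty V := ⟨u⟩
  obtain ⟨l, hl, hgaps⟩ := hcov.exists_gapCount_lt
  rw [tsub_le_iff_left] at hdeg
  by_cases hchain : l.IsChain fun a b ↦ (G ⊔ SimpleGraph.edge u v).Adj a b → G.Adj a b
  · exact hl.pathCoverable_of_gapCount_lt
      ((gapCount_le_gapCount_of_isChain hchain).trans_lt hgaps)
  · rw [List.isChain_iff_forall_rel_of_append_cons_cons] at hchain
    push Not at hchain
    obtain ⟨a, b, A, B, rfl, hab, hnadj⟩ := hchain
    obtain ⟨rfl, rfl⟩ | ⟨rfl, rfl⟩ := (SimpleGraph.edge_adj ..).1 (hab.resolve_left hnadj) |>.1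
    · exact hl.pathCoverable_of_gapCount_sup_edge_lt hgaps hdeg
    · rw [SimpleGraph.edge_comm] at hgaps
      exact hl.pathCoverable_of_gapCount_sup_edge_lt hgaps (by rwa [add_comm (G.degree a)])

/-- **Lemma 2.3** (Bondy–Chvátal): the property of being k-path-coverable is
`(n-k)`-stable. -/
theorem pathCoverable_stable {n k : ℕ} (G : SimpleGraph (Fin n)) [DecidableRel G.Adj]
    (u v : Fin n) (hne : u ≠ v) (hnadj : ¬G.Adj u v)
    (hdeg : n - k ≤ G.degree u + G.degree v)
    (hcov : PathCoverable (G ⊔ SimpleGraph.edge u v) k) :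
    PathCoverable G k :=
  pathCoverable_stable_general G u v (by rwa [Fintype.card_fin]) hcov
end

section
/- Let k ≥ 1 and δ ≥ 2 be integers and let n be such that n − 2δ − k ≥ 1. For every graph G in the family 𝓑₁(n,k,δ), the Q-index satisfies q(G) ≥ 2(n − k − δ − 1). -/
open Finset Matrix

/-!
The indicator vector of `S = Y ∪ Z` has Rayleigh quotient `(4 e(S) + e(S, Sᶜ)) / |S|` with respect
to the signless Laplacian. In `B(n,k,δ)` the set `S` is a clique and each of the `δ` vertices of `Y`
is joined to all `δ + k` vertices outside `S`, so the quotient is at least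
`2 (|S| - 1) + δ (δ + k) / |S|`. Deleting an edge inside `S` lowers the numerator by `4`, so after
at most `δ (δ + k) / 4` deletions it is still at least `2 (|S| - 1) = 2 (n - k - δ - 1)`.
-/

open scoped ComplexOrder MatrixOrder in
lemma star_dotProduct_mulVec_le_of_spectrum_le {ι 𝕜 : Type*} [Fintype ι] [DecidableEq ι]
    [RCLike 𝕜] {A : Matrix ι ι 𝕜} (hA : A.IsHermitian) {c : ℝ} (hc : ∀ μ ∈ spectrum ℝ A, μ ≤ c)
    (x : ι → 𝕜) : star x ⬝ᵥ (A *ᵥ x) ≤ c * (star x ⬝ᵥ x) := by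
  have hpos : (algebraMap ℝ (Matrix ι ι 𝕜) c - A).PosSemidef :=
    Matrix.le_iff.mp (le_algebraMap_of_spectrum_le hc hA)
  have h := hpos.dotProduct_mulVec_nonneg x
  rwa [Algebra.algebraMap_eq_smul_one, sub_mulVec, smul_mulVec, one_mulVec, dotProduct_sub,
    dotProduct_smul, sub_nonneg, RCLike.real_smul_eq_coe_mul] at h

lemma indicator_dotProduct_mulVec_indicator {ι κ R : Type*} [Fintype ι] [Fintype κ]
    [NonAssocSemiring R] (M : Matrix ι κ R) (S : Finset ι) (T : Finset κ) :
    (S : Set ι).indicator 1 ⬝ᵥ (M *ᵥ (T : Set κ).indicator 1) = ∑ u ∈ S, ∑ v ∈ T, M u v := by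
  classical simp [dotProduct, mulVec, Set.indicator_apply]

section QIndex

variable {V W : Type*} [Fintype V] [DecidableEq V] [Fintype W] [DecidableEq W]
  (G : SimpleGraph V) [DecidableRel G.Adj] {H : SimpleGraph W} [DecidableRel H.Adj]

lemma isHermitian_signlessLaplacian : (signlessLaplacian G).IsHermitian :=
  (G.isHermitian_degMatrix ℝ).add (G.isHermitian_adjMatrix ℝ)

lemma qIndex_eq_sSup_spectrum : qIndex G = sSup (spectrum ℝ (signlessLaplacian G)) := by
  rw [qIndex]
  congr 1 with μ
  rw [← spectrum_toLin', ← Module.End.hasEigenvalue_iff_mem_spectrum]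
  refine ⟨fun ⟨x, hx, hμ⟩ ↦ ?_, fun hμ ↦ ?_⟩
  · exact Module.End.hasEigenvalue_of_hasEigenvector ⟨Module.End.mem_eigenspace_iff.mpr hμ, hx⟩
  · obtain ⟨x, hx⟩ := hμ.exists_hasEigenvector
    exact ⟨x, hx.2, hx.apply_eq_smul⟩

lemma dotProduct_signlessLaplacian_mulVec_le (x : V → ℝ) :
    x ⬝ᵥ (signlessLaplacian G *ᵥ x) ≤ qIndex G * (x ⬝ᵥ x) := by
  rw [qIndex_eq_sSup_spectrum]
  exact star_dotProduct_mulVec_le_of_spectrum_le (isHermitian_signlessLaplacian G)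
    (fun _ hμ ↦ le_csSup (finite_spectrum _).bddAbove hμ) x

variable {G} in
lemma reindex_signlessLaplacian (f : G ≃g H) :
    (signlessLaplacian G).reindex f f = signlessLaplacian H := by
  have hdeg : (fun v ↦ (G.degree v : ℝ)) ∘ f.symm = fun w ↦ (H.degree w : ℝ) :=
    funext fun w ↦ congrArg Nat.cast (f.symm.degree_eq w)
  have hdiag : (diagonal fun v ↦ (G.degree v : ℝ)).submatrix f.symm f.symm =
      diagonal fun w ↦ (H.degree w : ℝ) :=
    hdeg ▸ submatrix_diagonal_equiv _ f.symm.toEquiv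
  exact congrArg₂ (· + ·) hdiag (f.reindex_adjMatrix ℝ)

variable {G} in
lemma qIndex_congr (f : G ≃g H) : qIndex G = qIndex H := by
  rw [qIndex_eq_sSup_spectrum, qIndex_eq_sSup_spectrum, ← reindex_signlessLaplacian f,
    ← coe_reindexAlgEquiv ℝ, AlgEquiv.spectrum_eq]

end QIndex

section Interedges

variable {V : Type*} (G : SimpleGraph V) [DecidableRel G.Adj]

lemma cast_card_interedges {R : Type*} [AddCommMonoidWithOne R] (S T : Finset V) :
    (#(G.interedges S T) : R) = ∑ u ∈ S, ∑ v ∈ T, if G.Adj u v then 1 else 0 := by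
  rw [SimpleGraph.interedges_def, ← sum_boole, sum_product]

variable [Fintype V] [DecidableEq V]

lemma sum_degree_eq_card_interedges_add_card_interedges_compl {R : Type*}
    [AddCommMonoidWithOne R] (S : Finset V) :
    ∑ v ∈ S, (G.degree v : R) = #(G.interedges S S) + #(G.interedges S Sᶜ) := by
  simp only [cast_card_interedges, ← sum_add_distrib, sum_add_sum_compl,
    ← SimpleGraph.degree_eq_sum_if_adj]

-- `interedges S S` consists of ordered pairs, so its cardinality is `2 e(S)`.
lemma indicator_dotProduct_signlessLaplacian_mulVec (S : Finset V) :
    (S : Set V).indicator 1 ⬝ᵥ (signlessLaplacian G *ᵥ (S : Set V).indicator 1) =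
      2 * #(G.interedges S S) + (#(G.interedges S Sᶜ) : ℝ) := by
  have hdiag : ∑ u ∈ S, ∑ v ∈ S, diagonal (fun v ↦ (G.degree v : ℝ)) u v =
      #(G.interedges S S) + #(G.interedges S Sᶜ) := by
    rw [← sum_degree_eq_card_interedges_add_card_interedges_compl]
    exact sum_congr rfl fun u hu ↦ by simp [diagonal_apply, hu]
  have hadj : ∑ u ∈ S, ∑ v ∈ S, G.adjMatrix ℝ u v = #(G.interedges S S) := by
    simp only [SimpleGraph.adjMatrix_apply, cast_card_interedges]
  rw [indicator_dotProduct_mulVec_indicator]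
  simp only [signlessLaplacian, Matrix.add_apply, sum_add_distrib, hdiag, hadj]
  ring

lemma two_mul_card_interedges_add_card_interedges_compl_le (S : Finset V) :
    2 * #(G.interedges S S) + (#(G.interedges S Sᶜ) : ℝ) ≤ qIndex G * #S := by
  have hnorm : (S : Set V).indicator (1 : V → ℝ) ⬝ᵥ (S : Set V).indicator 1 = #S := by
    simp [dotProduct, Set.indicator_apply]
  rw [← indicator_dotProduct_signlessLaplacian_mulVec, ← hnorm]
  exact dotProduct_signlessLaplacian_mulVec_le G _

end Interedges

section DeleteEdges

lemma card_filter_sym2Mk_mem_le {α : Type*} [DecidableEq α] (T : Finset (α × α))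
    (E : Finset (Sym2 α)) : #{p ∈ T | s(p.1, p.2) ∈ E} ≤ 2 * #E := by
  refine card_le_mul_card_image_of_maps_to (f := fun p ↦ s(p.1, p.2)) (by simp) 2 fun e _ ↦ ?_
  induction e with
  | h a b =>
    refine (card_le_card (t := {(a, b), (b, a)}) ?_).trans card_le_two
    rintro ⟨u, v⟩ huv
    simpa using (mem_filter.mp huv).2

variable {V : Type*} {G : SimpleGraph V} {S Y : Finset V} {E : Finset (Sym2 V)}
  [DecidableRel (G.deleteEdges (E : Set (Sym2 V))).Adj]

lemma card_offDiag_le_card_interedges_deleteEdges (hS : G.IsClique S) :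
    #S.offDiag ≤ #((G.deleteEdges (E : Set (Sym2 V))).interedges S S) + 2 * #E := by
  classical
  have hcover : S.offDiag ⊆ (G.deleteEdges (E : Set (Sym2 V))).interedges S S ∪
      {p ∈ S.offDiag | s(p.1, p.2) ∈ E} := by
    rintro ⟨u, v⟩ huv
    obtain ⟨hu, hv, hne⟩ := mem_offDiag.mp huv
    by_cases hE : s(u, v) ∈ E
    · exact mem_union_right _ (mem_filter.mpr ⟨huv, hE⟩)
    · exact mem_union_left _ ((SimpleGraph.mk_mem_interedges_iff _).mpr
        ⟨hu, hv, SimpleGraph.deleteEdges_adj.mpr ⟨hS hu hv hne, hE⟩⟩)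
  calc #S.offDiag ≤ _ := card_le_card hcover
    _ ≤ _ := card_union_le _ _
    _ ≤ _ := by gcongr; exact card_filter_sym2Mk_mem_le _ _

variable [Fintype V] [DecidableEq V]

lemma card_mul_card_compl_le_card_interedges_deleteEdges
    (hY : ∀ y ∈ Y, ∀ v ∉ S, G.Adj y v) (hE : ∀ e ∈ E, ∀ v ∈ e, v ∈ S) :
    #Y * #Sᶜ ≤ #((G.deleteEdges (E : Set (Sym2 V))).interedges S Sᶜ) := by
  rw [← card_product]
  refine card_le_card fun ⟨y, v⟩ hyv ↦ ?_
  obtain ⟨hy, hv⟩ := mem_product.mp hyv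
  have hyS : y ∈ S := by_contra fun h ↦ (hY y hy y h).ne rfl
  have hvS : v ∉ S := mem_compl.mp hv
  have hyvE : s(y, v) ∉ E := fun h ↦ hvS (hE _ h v (Sym2.mem_mk_right y v))
  exact (SimpleGraph.mk_mem_interedges_iff _).mpr
    ⟨hyS, hv, SimpleGraph.deleteEdges_adj.mpr ⟨hY y hy v hvS, hyvE⟩⟩

lemma two_mul_card_sub_one_le_qIndex_deleteEdges (hne : S.Nonempty) (hS : G.IsClique S)
    (hY : ∀ y ∈ Y, ∀ v ∉ S, G.Adj y v) (hE : ∀ e ∈ E, ∀ v ∈ e, v ∈ S)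
    (hcard : 4 * #E ≤ #Y * #Sᶜ) :
    2 * ((#S : ℝ) - 1) ≤ qIndex (G.deleteEdges (E : Set (Sym2 V))) := by
  have hinner := card_offDiag_le_card_interedges_deleteEdges (E := E) hS
  have hcross := card_mul_card_compl_le_card_interedges_deleteEdges hY hE
  have hoffDiag : (#S.offDiag : ℝ) = (#S - 1) * #S := by
    rw [offDiag_card, Nat.cast_sub (Nat.le_mul_self _)]
    push_cast
    ring
  refine le_of_mul_le_mul_right ?_ (Nat.cast_pos.mpr hne.card_pos)
  calc 2 * ((#S : ℝ) - 1) * #S = 2 * (#S.offDiag : ℝ) := by rw [hoffDiag, mul_assoc]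
    _ ≤ 2 * #((G.deleteEdges (E : Set (Sym2 V))).interedges S S) +
        #((G.deleteEdges (E : Set (Sym2 V))).interedges S Sᶜ) := by norm_cast; omega
    _ ≤ _ := two_mul_card_interedges_add_card_interedges_compl_le _ S

end DeleteEdges

section Bgraph

variable {n k δ : ℕ}

/-- The part `Y` of `B(n,k,δ)`, whose vertices are adjacent to all others. -/
def dominatingClique (n δ : ℕ) : Finset (Fin n) := {v | v < δ}

/-- The set `Y ∪ Z` of `B(n,k,δ)`, the complement of the independent part `X`; the edges deleted
in the family `𝓑₁` lie inside it. -/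
def coreClique (n k δ : ℕ) : Finset (Fin n) := {v | v < n - (δ + k)}

lemma mem_dominatingClique {v : Fin n} : v ∈ dominatingClique n δ ↔ (v : ℕ) < δ := by
  simp [dominatingClique]

lemma mem_coreClique {v : Fin n} : v ∈ coreClique n k δ ↔ (v : ℕ) < n - (δ + k) := by
  simp [coreClique]

lemma card_dominatingClique (h : δ ≤ n) : #(dominatingClique n δ) = δ := by
  rw [dominatingClique, Fin.card_filter_val_lt, min_eq_right h]

lemma card_coreClique : #(coreClique n k δ) = n - (δ + k) := by
  rw [coreClique, Fin.card_filter_val_lt, min_eq_right (Nat.sub_le _ _)]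

lemma card_compl_coreClique (h : δ + k ≤ n) : #(coreClique n k δ)ᶜ = δ + k := by
  rw [card_compl, Fintype.card_fin, card_coreClique, Nat.sub_sub_self h]

lemma isClique_coreClique : (Bgraph n k δ).IsClique (coreClique n k δ) :=
  fun _ hu _ hv huv ↦ ⟨huv, .inr (.inr ⟨mem_coreClique.mp hu, mem_coreClique.mp hv⟩)⟩

lemma adj_of_mem_dominatingClique {y v : Fin n} (hy : y ∈ dominatingClique n δ) (hyv : y ≠ v) :
    (Bgraph n k δ).Adj y v :=
  ⟨hyv, .inl (mem_dominatingClique.mp hy)⟩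

lemma dominatingClique_subset_coreClique (h : 2 * δ + k ≤ n) :
    dominatingClique n δ ⊆ coreClique n k δ := by
  intro y hy
  have hyδ := mem_dominatingClique.mp hy
  exact mem_coreClique.mpr (by omega)

end Bgraph

theorem qIndex_ge_of_inB1_general {k δ n : ℕ} (hn : 2 * δ + k + 1 ≤ n)
    (G : SimpleGraph (Fin n)) [DecidableRel G.Adj] (hG : InB1 n k δ G) :
    2 * ((n : ℝ) - k - δ - 1) ≤ qIndex G := by
  obtain ⟨E, hE, hEcard, ⟨f⟩⟩ := hG
  have hne : (coreClique n k δ).Nonempty := card_pos.mp (by rw [card_coreClique]; omega)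
  have hjoin : ∀ y ∈ dominatingClique n δ, ∀ v ∉ coreClique n k δ, (Bgraph n k δ).Adj y v :=
    fun y hy v hv ↦ adj_of_mem_dominatingClique hy
      (ne_of_mem_of_not_mem (dominatingClique_subset_coreClique (by omega) hy) hv)
  have hEcore : ∀ e ∈ E, ∀ v ∈ e, v ∈ coreClique n k δ :=
    fun e he v hv ↦ mem_coreClique.mpr ((hE e he).2 v hv)
  have hcard : 4 * #E ≤ #(dominatingClique n δ) * #(coreClique n k δ)ᶜ := by
    rw [card_dominatingClique (by omega), card_compl_coreClique (by omega)]
    omega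
  have hcore : (#(coreClique n k δ) : ℝ) = n - k - δ := by
    rw [card_coreClique, Nat.cast_sub (by omega), Nat.cast_add]
    ring
  rw [qIndex_congr f, ← hcore]
  exact two_mul_card_sub_one_le_qIndex_deleteEdges hne isClique_coreClique hjoin hEcore hcard

/-- **Lemma 3.2**: every graph in the family `𝓑₁(n,k,δ)` has Q-index at least
`2(n-k-δ-1)`. -/
theorem qIndex_ge_of_inB1 (k δ n : ℕ) (hk : 1 ≤ k) (hδ : 2 ≤ δ)
    (hn : 2 * δ + k + 1 ≤ n)
    (G : SimpleGraph (Fin n)) [DecidableRel G.Adj] (hG : InB1 n k δ G) :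
    2 * ((n : ℝ) - k - δ - 1) ≤ qIndex G :=
  qIndex_ge_of_inB1_general hn G hG
end
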